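/- (Lemma 3.1) In the simplified model with constant σ, τ and i.i.d. standard Gaussian noise, the mean squared error of the integrated-volatility estimator satisfies MSE(⟨σ²,1⟩^) = E[(⟨σ²,1⟩^ − σ²)²] = (4/c)(∫₀¹ σ²Λ(u)Λ(1−u) − (τc)² λ(u)λ(1−u) du)² n^{−1/2} + (2/c)(σ² + 2(τc)² ∫₀¹ λ(u)² du)² n^{−1/2} + o(n^{−1/2}); equivalently, lim_{n→∞} n^{1/2} E[(⟨σ²,1⟩^ − σ²)²] = (4/c)(σ² ∫₀¹ Λ(u)Λ(1−u) du − τ²c² ∫₀¹ λ(u)λ(1−u) du)² + (2/c)(σ² + 2τ²c² ∫₀¹ λ(u)² du)². -/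

import Mathlib

open MeasureTheory ProbabilityTheory Real

noncomputable section

/-- `Λ(u) = -∫₀ᵘ λ(v) dv`. -/
def bigLam (lam : ℝ → ℝ) (u : ℝ) : ℝ := -∫ v in (0:ℝ)..u, lam v

/-- A (normalized) pre-average function: piecewise Lipschitz on `[0,2]`,
antisymmetric about `1`, and normalized. -/
structure IsPreAverageFn (lam : ℝ → ℝ) : Prop where
  piecewise_lipschitz : ∃ (N : ℕ) (t : ℕ → ℝ) (K : NNReal),
      0 < N ∧ t 0 = 0 ∧ t N = 2 ∧ (∀ i < N, t i < t (i + 1)) ∧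
      ∀ i < N, LipschitzOnWith K lam (Set.Ioo (t i) (t (i + 1)))
  antisymm : ∀ t ∈ Set.Icc (0:ℝ) 1, lam t = - lam (2 - t)
  normalized : Real.sqrt (2 * ∫ s in (0:ℝ)..1, (∫ u in (0:ℝ)..s, lam u) ^ 2) = 1

/-- `m = n / ⌊√n / c⌋`. -/
def mOf (c : ℝ) (n : ℕ) : ℕ := n / ⌊Real.sqrt n / c⌋₊

/-- The indices `j` with `j/n ∈ [(i-2)/m , i/m]`. -/
def blockIdx (n m i : ℕ) : Finset ℕ :=
  (Finset.range (n + 1)).filter fun j =>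
    ((i : ℝ) - 2) / m ≤ (j : ℝ) / n ∧ (j : ℝ) / n ≤ (i : ℝ) / m

variable {Ω : Type*}

/-- Pre-averaged value `Ā_{i,m} = (m/n) ∑_{j/n ∈ [(i-2)/m, i/m]} λ(m j/n - (i-2)) A_j`. -/
def preAvg (lam : ℝ → ℝ) (n m : ℕ) (A : ℕ → Ω → ℝ) (i : ℕ) (ω : Ω) : ℝ :=
  ((m : ℝ) / n) * ∑ j ∈ blockIdx n m i,
    lam ((m : ℝ) * j / n - ((i : ℝ) - 2)) * A j ω

/-- Bias correction `𝔟(λ, A)_{i,m}`. -/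
def biasCorr (lam : ℝ → ℝ) (n m : ℕ) (A : ℕ → Ω → ℝ) (i : ℕ) (ω : Ω) : ℝ :=
  ((m : ℝ) ^ 2 / (2 * (n : ℝ) ^ 2)) * ∑ j ∈ (blockIdx n m i).filter (fun j => 1 ≤ j),
    (lam ((m : ℝ) * j / n - ((i : ℝ) - 2))) ^ 2 * (A j ω - A (j - 1) ω) ^ 2

/-- The simplified model: `(W_{j/n})_j` and `(η_{j,n})_j` form a centered jointly Gaussian
family with `Cov(W_{j/n}, W_{l/n}) = min(j,l)/n`, `(η_{j,n})` standard Gaussian i.i.d.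
and uncorrelated with the `W` grid values. -/
def IsSimplifiedModel [MeasureSpace Ω] (n : ℕ) (W η : ℕ → Ω → ℝ) : Prop :=
  (∀ j, Measurable (W j)) ∧ (∀ j, Measurable (η j)) ∧
  (∀ a b : ℕ → ℝ, ∃ v : NNReal,
    Measure.map (fun ω => ∑ j ∈ Finset.range (n + 1), (a j * W j ω + b j * η j ω)) ℙ
      = gaussianReal 0 v) ∧
  (∀ j l, j ≤ n → l ≤ n → ∫ ω, W j ω * W l ω = (min j l : ℝ) / n) ∧
  (∀ j l, j ≤ n → l ≤ n → ∫ ω, η j ω * η l ω = if j = l then 1 else 0) ∧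
  (∀ j l, j ≤ n → l ≤ n → ∫ ω, W j ω * η l ω = 0)

/-- The observations `Y_{j,n} = σ W_{j/n} + τ η_{j,n}`. -/
def obs (σ τ : ℝ) (W η : ℕ → Ω → ℝ) (j : ℕ) (ω : Ω) : ℝ := σ * W j ω + τ * η j ω

end

open scoped NNReal ENNReal Topology

/-!
The estimator is `A - B` with `A = ∑ Ȳᵢ²` and `B` the sum of the bias corrections, so its mean
squared error is `Var A - 2 Cov(A, B) + Var B` plus the squared bias. For jointly Gaussian centered
variables `Cov(X², Z²) = 2 Cov(X, Z)²`, so both variances only involve covariances of linear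
statistics. Summation by parts turns the Brownian part of `Cov(Ȳᵢ, Ȳₗ)` into a Riemann sum of the
autocorrelation of `Λ` at `i - l`, the noise part being one of the autocorrelation of `λ`. Both
vanish when `|i - l| ≥ 2`, and bounded variation of `λ` controls the Riemann sums. Hence
`√n Var A` has a limit assembled from lags `0` and `1`. The bias corrections average over
all increments, so `√n Var B → 0`, which by Cauchy–Schwarz disposes of `Cov(A, B)` too, and their
mean cancels the noise part of `E Ȳᵢ²` up to terms making the squared bias `o(n^{-1/2})`.
-/

/-- Functions supported in `[0, 2]` whose total variation on the line is at most `V`. The zero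
extensions of `λ` and `Λ` are of this kind, and so are the products `f(u) f(u + d)`. -/
structure IsBVKernel (V : ℝ≥0) (f : ℝ → ℝ) : Prop where
  eVariationOn_le : eVariationOn f Set.univ ≤ V
  support_subset : Function.support f ⊆ Set.Icc 0 2

section RiemannSum

variable {f : ℝ → ℝ} {V : ℝ≥0} {a b h : ℝ}

theorem intervalIntegrable_of_boundedVariationOn (hf : BoundedVariationOn f (Set.uIcc a b)) :
    IntervalIntegrable f volume a b := by
  obtain ⟨p, q, hp, hq, rfl⟩ :=
    hf.locallyBoundedVariationOn.exists_monotoneOn_sub_monotoneOn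
  exact hp.intervalIntegrable.sub hq.intervalIntegrable

theorem abs_sub_le_toReal_eVariationOn {x y : ℝ} {s : Set ℝ} (hf : BoundedVariationOn f s)
    (hx : x ∈ s) (hy : y ∈ s) : |f x - f y| ≤ (eVariationOn f s).toReal := by
  simpa only [Real.dist_eq] using hf.dist_le hx hy

theorem abs_mul_sub_integral_le_of_boundedVariationOn {ξ : ℝ} (hab : a ≤ b)
    (hf : BoundedVariationOn f (Set.Icc a b)) (hξ : ξ ∈ Set.Icc a b) :
    |(b - a) * f ξ - ∫ x in a..b, f x| ≤ (b - a) * (eVariationOn f (Set.Icc a b)).toReal := by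
  have hint : IntervalIntegrable f volume a b :=
    intervalIntegrable_of_boundedVariationOn (by rwa [Set.uIcc_of_le hab])
  calc |(b - a) * f ξ - ∫ x in a..b, f x|
      = ‖∫ x in a..b, (f ξ - f x)‖ := by
        rw [intervalIntegral.integral_sub intervalIntegrable_const hint,
          intervalIntegral.integral_const, smul_eq_mul, Real.norm_eq_abs]
    _ ≤ (eVariationOn f (Set.Icc a b)).toReal * |b - a| :=
        intervalIntegral.norm_integral_le_of_norm_le_const fun x hx =>
          abs_sub_le_toReal_eVariationOn hf hξ
            (Set.Ioc_subset_Icc_self (by rwa [Set.uIoc_of_le hab] at hx))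
    _ = (b - a) * (eVariationOn f (Set.Icc a b)).toReal := by
        rw [abs_of_nonneg (sub_nonneg.2 hab), mul_comm]

theorem abs_mul_sum_sub_integral_le_of_eVariationOn_le (hh : 0 ≤ h) {N : ℕ} {ξ : ℕ → ℝ}
    (hf : eVariationOn f (Set.Icc a (a + N * h)) ≤ V)
    (hξ : ∀ j < N, ξ j ∈ Set.Icc (a + j * h) (a + (j + 1) * h)) :
    |h * ∑ j ∈ Finset.range N, f (ξ j) - ∫ x in a..a + N * h, f x| ≤ h * V := by
  set t : ℕ → ℝ := fun j => a + j * h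
  have ht_succ (j : ℕ) : t (j + 1) - t j = h := by simp only [t, Nat.cast_succ]; ring
  have ht : Monotone t := monotone_nat_of_le_succ fun j => by linarith [ht_succ j]
  have ht0 : t 0 = a := by simp [t]
  have hbv (j : ℕ) (hj : j < N) : BoundedVariationOn f (Set.Icc (t j) (t (j + 1))) :=
    ne_top_of_le_ne_top ENNReal.coe_ne_top <| (eVariationOn.mono f <|
      Set.Icc_subset_Icc (ht0 ▸ ht (Nat.zero_le j)) (ht (Nat.succ_le_of_lt hj))).trans hf
  have hint (j : ℕ) (hj : j < N) : IntervalIntegrable f volume (t j) (t (j + 1)) :=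
    intervalIntegrable_of_boundedVariationOn
      (by rw [Set.uIcc_of_le (ht j.le_succ)]; exact hbv j hj)
  have hsum : ∑ j ∈ Finset.range N, (eVariationOn f (Set.Icc (t j) (t (j + 1)))).toReal ≤ V := by
    rw [← ENNReal.toReal_sum fun j hj => hbv j (Finset.mem_range.1 hj), eVariationOn.sum' f ht, ht0]
    exact ENNReal.toReal_le_coe_of_le_coe hf
  calc |h * ∑ j ∈ Finset.range N, f (ξ j) - ∫ x in a..t N, f x|
      = |∑ j ∈ Finset.range N,
          ((t (j + 1) - t j) * f (ξ j) - ∫ x in t j..t (j + 1), f x)| := by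
        simp only [Finset.sum_sub_distrib, ht_succ, Finset.mul_sum,
          intervalIntegral.sum_integral_adjacent_intervals hint, ht0]
    _ ≤ ∑ j ∈ Finset.range N,
          (t (j + 1) - t j) * (eVariationOn f (Set.Icc (t j) (t (j + 1)))).toReal := by
        refine (Finset.abs_sum_le_sum_abs _ _).trans (Finset.sum_le_sum fun j hj => ?_)
        refine abs_mul_sub_integral_le_of_boundedVariationOn (ht j.le_succ)
          (hbv j (Finset.mem_range.1 hj)) ?_
        simpa only [t, Nat.cast_succ] using hξ j (Finset.mem_range.1 hj)
    _ ≤ h * V := by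
        simp only [ht_succ, ← Finset.mul_sum]
        gcongr

end RiemannSum

namespace IsBVKernel

variable {V : ℝ≥0} {f : ℝ → ℝ} {a h : ℝ}

theorem apply_eq_zero (hf : IsBVKernel V f) {x : ℝ} (hx : x ∉ Set.Icc (0 : ℝ) 2) : f x = 0 :=
  Function.notMem_support.1 fun hmem => hx (hf.support_subset hmem)

theorem boundedVariationOn (hf : IsBVKernel V f) (s : Set ℝ) : BoundedVariationOn f s :=
  ne_top_of_le_ne_top ENNReal.coe_ne_top
    ((eVariationOn.mono f (Set.subset_univ s)).trans hf.eVariationOn_le)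

theorem abs_apply_le (hf : IsBVKernel V f) (x : ℝ) : |f x| ≤ V := by
  have hneg : f (-1) = 0 := hf.apply_eq_zero (by norm_num)
  have hdiff := abs_sub_le_toReal_eVariationOn (hf.boundedVariationOn Set.univ)
    (Set.mem_univ x) (Set.mem_univ (-1))
  rw [hneg, sub_zero] at hdiff
  exact hdiff.trans (ENNReal.toReal_le_coe_of_le_coe hf.eVariationOn_le)

theorem enorm_apply_le (hf : IsBVKernel V f) (x : ℝ) : ‖f x‖ₑ ≤ V := by
  rw [Real.enorm_eq_ofReal_abs]
  exact ENNReal.ofReal_le_coe.2 (hf.abs_apply_le x)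

theorem intervalIntegrable (hf : IsBVKernel V f) (a b : ℝ) : IntervalIntegrable f volume a b :=
  intervalIntegrable_of_boundedVariationOn (hf.boundedVariationOn _)

theorem integral_eq_intervalIntegral (hf : IsBVKernel V f) {a b : ℝ} (ha : a ≤ 0) (hb : 2 ≤ b) :
    ∫ x, f x = ∫ x in a..b, f x := by
  rw [intervalIntegral.integral_of_le (by linarith), ← integral_Icc_eq_integral_Ioc]
  exact (setIntegral_eq_integral_of_forall_compl_eq_zero fun x hx =>
    hf.apply_eq_zero fun hx' => hx (Set.Icc_subset_Icc ha hb hx')).symm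

theorem abs (hf : IsBVKernel V f) : IsBVKernel V fun x => |f x| where
  eVariationOn_le := by
    have hle := (lipschitzWith_one_norm (E := ℝ)).lipschitzOnWith.comp_eVariationOn_le
      (Set.mapsTo_univ f Set.univ)
    rw [ENNReal.coe_one, one_mul] at hle
    exact hle.trans hf.eVariationOn_le
  support_subset := fun _ hx => hf.support_subset (abs_ne_zero.1 hx)

theorem mul_comp_add (hf : IsBVKernel V f) (d : ℝ) :
    IsBVKernel (2 * V ^ 2) fun x => f x * f (x + d) where
  eVariationOn_le := by
    have hshift : eVariationOn (fun x => f (x + d)) Set.univ ≤ V :=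
      (eVariationOn.comp_le_of_monotoneOn f (fun x => x + d)
        ((monotone_id.add_const d).monotoneOn _) (Set.mapsTo_univ _ _)).trans hf.eVariationOn_le
    calc eVariationOn (fun x => f x * f (x + d)) Set.univ
        ≤ V * eVariationOn (fun x => f (x + d)) Set.univ + V * eVariationOn f Set.univ :=
          eVariationOn_fun_mul_le (fun x _ => hf.enorm_apply_le x)
            fun x _ => hf.enorm_apply_le (x + d)
      _ ≤ V * V + V * V := by gcongr; exact hf.eVariationOn_le
      _ = ((2 * V ^ 2 : ℝ≥0) : ℝ≥0∞) := by push_cast; ring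
  support_subset :=
    (Function.support_mul_subset_left f fun x => f (x + d)).trans hf.support_subset

theorem sq (hf : IsBVKernel V f) : IsBVKernel (2 * V ^ 2) fun x => f x ^ 2 := by
  simpa only [add_zero, ← pow_two] using hf.mul_comp_add 0

theorem abs_mul_sum_sub_integral_le (hf : IsBVKernel V f) (hh : 0 ≤ h) {N : ℕ} {ξ : ℕ → ℝ}
    (ha : a ≤ 0) (hb : 2 ≤ a + N * h)
    (hξ : ∀ j < N, ξ j ∈ Set.Icc (a + j * h) (a + (j + 1) * h)) :
    |h * ∑ j ∈ Finset.range N, f (ξ j) - ∫ x, f x| ≤ h * V := by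
  rw [hf.integral_eq_intervalIntegral ha hb]
  exact abs_mul_sum_sub_integral_le_of_eVariationOn_le hh
    ((eVariationOn.mono f (Set.subset_univ _)).trans hf.eVariationOn_le) hξ

theorem mul_sum_abs_le (hf : IsBVKernel V f) (hh : 0 ≤ h) {N : ℕ} {ξ : ℕ → ℝ}
    (ha : a ≤ 0) (hb : 2 ≤ a + N * h)
    (hξ : ∀ j < N, ξ j ∈ Set.Icc (a + j * h) (a + (j + 1) * h)) :
    h * ∑ j ∈ Finset.range N, |f (ξ j)| ≤ (2 + h) * V := by
  have hint : ∫ x, |f x| ≤ 2 * V := by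
    rw [hf.abs.integral_eq_intervalIntegral le_rfl le_rfl]
    calc ∫ x in (0 : ℝ)..2, |f x| ≤ ∫ _ in (0 : ℝ)..2, (V : ℝ) :=
          intervalIntegral.integral_mono zero_le_two (hf.abs.intervalIntegrable 0 2)
            intervalIntegrable_const hf.abs_apply_le
      _ = 2 * V := by simp
  have hsum := le_of_abs_le (hf.abs.abs_mul_sum_sub_integral_le hh ha hb hξ)
  linarith

end IsBVKernel

section PiecewiseLipschitz

variable {f : ℝ → ℝ} {K : ℝ≥0} {a b : ℝ}

theorem boundedVariationOn_Icc_of_lipschitzOnWith_Ioo (hab : a < b)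
    (hf : LipschitzOnWith K f (Set.Ioo a b)) : BoundedVariationOn f (Set.Icc a b) := by
  obtain ⟨g, hg, hfg⟩ := hf.extend_real
  have hf_Ioo : BoundedVariationOn f (Set.Ioo a b) := by
    rw [BoundedVariationOn, eVariationOn.congr hfg]
    refine BoundedVariationOn.mono ?_ (Set.Ioo_subset_Icc_self (a := a) (b := b))
    simpa only [Set.univ_inter] using
      hg.locallyBoundedVariationOn Set.univ a b (Set.mem_univ a) (Set.mem_univ b)
  have hlim (x : ℝ) : Filter.Tendsto f (𝓝[Set.Ioo a b] x) (𝓝 (g x)) :=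
    (hg.continuous.continuousAt.mono_left nhdsWithin_le_nhds).congr'
      (eventually_nhdsWithin_of_forall fun y hy => (hfg hy).symm)
  have hf_Ico : BoundedVariationOn f (Set.Ico a b) := by
    have hIoo : Set.Ico a b ∩ Set.Ioi a = Set.Ioo a b := by grind
    have hvar := eVariationOn.eVariationOn_on_inter_Ici_eq_Ioi_add_edist (f := f)
      (hIoo ▸ left_nhdsWithin_Ioo_neBot hab) (Set.left_mem_Ico.2 hab) (hIoo ▸ hlim a)
    rw [hIoo, Set.inter_eq_left.2 fun x hx => hx.1] at hvar
    exact hvar.trans_ne (ENNReal.add_ne_top.2 ⟨hf_Ioo, edist_ne_top _ _⟩)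
  have hIco : Set.Icc a b ∩ Set.Iio b = Set.Ico a b := by grind
  have hnhds : 𝓝[Set.Ico a b] b = 𝓝[Set.Ioo a b] b :=
    (nhdsWithin_Ico_eq_nhdsLT hab).trans (nhdsWithin_Ioo_eq_nhdsLT hab).symm
  have hvar := eVariationOn.eVariationOn_on_inter_Iic_eq_Iio_add_edist (f := f)
    (hIco ▸ hnhds ▸ right_nhdsWithin_Ioo_neBot hab) (Set.right_mem_Icc.2 hab.le)
    (hIco ▸ hnhds ▸ hlim b)
  rw [hIco, Set.inter_eq_left.2 fun x hx => hx.2] at hvar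
  exact hvar.trans_ne (ENNReal.add_ne_top.2 ⟨hf_Ico, edist_ne_top _ _⟩)

theorem boundedVariationOn_Icc_of_piecewise {N : ℕ} {t : ℕ → ℝ} (ht : ∀ i < N, t i ≤ t (i + 1))
    (hf : ∀ i < N, BoundedVariationOn f (Set.Icc (t i) (t (i + 1)))) :
    BoundedVariationOn f (Set.Icc (t 0) (t N)) := by
  have hmono : Monotone fun i => t (min i N) := by
    refine monotone_nat_of_le_succ fun i => ?_
    rcases lt_or_ge i N with hi | hi
    · simpa only [min_eq_left hi.le, min_eq_left (Nat.succ_le_of_lt hi)] using ht i hi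
    · simp only [min_eq_right hi, min_eq_right (hi.trans i.le_succ), le_refl]
  have hsum := eVariationOn.sum' f hmono (n := N)
  simp only [Nat.zero_min, min_self] at hsum
  rw [BoundedVariationOn, ← hsum]
  refine ENNReal.sum_ne_top.2 fun i hi => ?_
  rw [Finset.mem_range] at hi
  rw [min_eq_left hi.le, min_eq_left (Nat.succ_le_of_lt hi)]
  exact hf i hi

theorem IsPreAverageFn.boundedVariationOn {lam : ℝ → ℝ} (hlam : IsPreAverageFn lam) :
    BoundedVariationOn lam (Set.Icc 0 2) := by
  obtain ⟨N, t, K, -, ht0, htN, ht, hlip⟩ := hlam.piecewise_lipschitz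
  rw [← ht0, ← htN]
  exact boundedVariationOn_Icc_of_piecewise (fun i hi => (ht i hi).le) fun i hi =>
    boundedVariationOn_Icc_of_lipschitzOnWith_Ioo (ht i hi) (hlip i hi)

end PiecewiseLipschitz

section ZeroExtension

variable {f : ℝ → ℝ} {a b : ℝ}

theorem boundedVariationOn_indicator_Ici (a : ℝ) :
    BoundedVariationOn ((Set.Ici a).indicator fun _ => (1 : ℝ)) Set.univ := by
  refine MonotoneOn.boundedVariationOn (C := 1) (fun x _ y _ hxy => ?_) fun x _ => ?_
  · simp only [Set.indicator_apply, Set.mem_Ici]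
    split_ifs with hx hy hy
    exacts [le_rfl, absurd (hx.trans hxy) hy, zero_le_one, le_rfl]
  · simp only [Set.indicator_apply]
    split_ifs <;> simp

theorem boundedVariationOn_indicator_Icc (hab : a ≤ b) (hf : BoundedVariationOn f (Set.Icc a b)) :
    BoundedVariationOn ((Set.Icc a b).indicator f) Set.univ := by
  have hclamp : BoundedVariationOn (fun x => f (Set.projIcc a b hab x)) Set.univ :=
    ne_top_of_le_ne_top hf (eVariationOn.comp_le_of_monotoneOn f _
      (((Subtype.mono_coe _).comp (Set.monotone_projIcc hab)).monotoneOn _)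
      fun x _ => (Set.projIcc a b hab x).2)
  have hIic : BoundedVariationOn (fun x => (Set.Ici (-b)).indicator (fun _ => (1 : ℝ)) (-x))
      Set.univ :=
    ne_top_of_le_ne_top (boundedVariationOn_indicator_Ici (-b))
      (eVariationOn.comp_le_of_antitoneOn _ (fun x : ℝ => -x)
        (fun _ _ _ _ hxy => neg_le_neg hxy) (Set.mapsTo_univ _ _))
  convert (hclamp.mul (boundedVariationOn_indicator_Ici a)).mul hIic using 1
  ext x
  by_cases hx : x ∈ Set.Icc a b
  · simp [hx, hx.1, hx.2, Set.projIcc_of_mem hab hx]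
  · rw [Set.indicator_of_notMem hx]
    rcases not_and_or.1 hx with hx | hx <;> simp [hx]

theorem exists_isBVKernel_indicator (hf : BoundedVariationOn f (Set.Icc 0 2)) :
    ∃ V, IsBVKernel V ((Set.Icc 0 2).indicator f) :=
  ⟨_, (ENNReal.coe_toNNReal (boundedVariationOn_indicator_Icc zero_le_two hf)).ge,
    Set.support_indicator_subset⟩

end ZeroExtension

section Reflection

variable {V : ℝ≥0} {f : ℝ → ℝ} {x : ℝ}

theorem integral_eq_zero_of_antisymm (hanti : ∀ x, f (2 - x) = -f x) : ∫ x, f x = 0 := by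
  have hrefl := integral_sub_left_eq_self f volume 2
  simp only [hanti, integral_neg] at hrefl
  linarith

namespace IsBVKernel

theorem bigLam_eq_integral (hf : IsBVKernel V f) (hint : ∫ x, f x = 0) {b : ℝ} (hb : 2 ≤ b)
    (x : ℝ) : bigLam f x = ∫ u in x..b, f u := by
  rw [hf.integral_eq_intervalIntegral le_rfl hb,
    ← intervalIntegral.integral_add_adjacent_intervals (hf.intervalIntegrable 0 x)
      (hf.intervalIntegrable x b)] at hint
  rw [bigLam]
  linarith

theorem bigLam_eq_zero (hf : IsBVKernel V f) (hint : ∫ x, f x = 0)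
    (hx : x ∉ Set.Icc (0 : ℝ) 2) : bigLam f x = 0 := by
  rcases lt_or_ge x 0 with hneg | hnonneg
  · rw [hf.bigLam_eq_integral hint le_rfl, ← hf.integral_eq_intervalIntegral hneg.le le_rfl, hint]
  · have hx2 : 2 ≤ x := by
      by_contra hlt
      exact hx ⟨hnonneg, (not_le.1 hlt).le⟩
    rw [bigLam, ← hf.integral_eq_intervalIntegral le_rfl hx2, hint, neg_zero]

theorem lipschitzWith_bigLam (hf : IsBVKernel V f) : LipschitzWith V (bigLam f) := by
  refine LipschitzWith.of_dist_le_mul fun x y => ?_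
  rw [Real.dist_eq, Real.dist_eq, bigLam, bigLam, neg_sub_neg,
    intervalIntegral.integral_interval_sub_left (hf.intervalIntegrable 0 y)
      (hf.intervalIntegrable 0 x), abs_sub_comm x y]
  exact intervalIntegral.norm_integral_le_of_norm_le_const (f := f)
    fun u _ => hf.abs_apply_le u

theorem exists_isBVKernel_bigLam (hf : IsBVKernel V f) (hint : ∫ x, f x = 0) :
    ∃ V', IsBVKernel V' (bigLam f) := by
  have hbv : BoundedVariationOn (bigLam f) (Set.Icc 0 2) := by
    simpa only [Set.univ_inter] using hf.lipschitzWith_bigLam.locallyBoundedVariationOn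
      Set.univ 0 2 (Set.mem_univ _) (Set.mem_univ _)
  obtain ⟨V', hV'⟩ := exists_isBVKernel_indicator hbv
  rw [Set.indicator_eq_self.2 fun x hx => not_imp_comm.1 (hf.bigLam_eq_zero hint) hx] at hV'
  exact ⟨V', hV'⟩

theorem bigLam_two_sub (hf : IsBVKernel V f) (hanti : ∀ x, f (2 - x) = -f x) (x : ℝ) :
    bigLam f (2 - x) = bigLam f x := by
  have hrefl : ∫ u in x..2, f (2 - u) = ∫ u in (0 : ℝ)..2 - x, f u := by
    rw [intervalIntegral.integral_comp_sub_left, sub_self]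
  rw [hf.bigLam_eq_integral (integral_eq_zero_of_antisymm hanti) le_rfl x, bigLam, ← hrefl]
  simp only [hanti, intervalIntegral.integral_neg, neg_neg]

end IsBVKernel

end Reflection

section Autocorrelation

variable {V : ℝ≥0} {f g : ℝ → ℝ}

/-- The autocorrelation `∫ f(u) f(u + d) du` of a kernel at lag `d`. Those of `λ` and `Λ` at the
lags `0` and `1` are the constants of the limiting mean squared error. -/
noncomputable def autocorr (f : ℝ → ℝ) (d : ℝ) : ℝ := ∫ u, f u * f (u + d)

theorem autocorr_neg (f : ℝ → ℝ) (d : ℝ) : autocorr f (-d) = autocorr f d := by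
  rw [autocorr, ← integral_add_right_eq_self _ d]
  exact integral_congr_ae (ae_of_all _ fun u => by simp only [add_neg_cancel_right, mul_comm])

namespace IsBVKernel

theorem autocorr_eq_zero (hf : IsBVKernel V f) {d : ℝ} (hd : 2 ≤ d) : autocorr f d = 0 := by
  refine integral_eq_zero_of_ae ?_
  filter_upwards [Measure.ae_ne volume (0 : ℝ)] with u hu
  by_cases hmem : u ∈ Set.Icc (0 : ℝ) 2
  · have hpos : 0 < u := lt_of_le_of_ne hmem.1 hu.symm
    rw [hf.apply_eq_zero (x := u + d) fun h => by linarith [h.2], mul_zero, Pi.zero_apply]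
  · rw [hf.apply_eq_zero hmem, zero_mul, Pi.zero_apply]

theorem autocorr_zero_eq (hf : IsBVKernel V f) (hfg : Set.EqOn f g (Set.Icc 0 1))
    (hrefl : ∀ x, f (2 - x) ^ 2 = f x ^ 2) :
    autocorr f 0 = 2 * ∫ u in (0 : ℝ)..1, g u ^ 2 := by
  rw [← Set.uIcc_of_le zero_le_one] at hfg
  have hhalf : ∫ u in (1 : ℝ)..2, f u ^ 2 = ∫ u in (0 : ℝ)..1, f u ^ 2 := by
    calc ∫ u in (1 : ℝ)..2, f u ^ 2 = ∫ u in (0 : ℝ)..1, f (2 - u) ^ 2 := by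
          rw [intervalIntegral.integral_comp_sub_left fun u => f u ^ 2]; norm_num
      _ = ∫ u in (0 : ℝ)..1, f u ^ 2 := by simp only [hrefl]
  calc autocorr f 0 = ∫ u, f u ^ 2 := by simp only [autocorr, add_zero, pow_two]
    _ = (∫ u in (0 : ℝ)..1, f u ^ 2) + ∫ u in (1 : ℝ)..2, f u ^ 2 := by
        rw [hf.sq.integral_eq_intervalIntegral le_rfl le_rfl,
          intervalIntegral.integral_add_adjacent_intervals (hf.sq.intervalIntegrable 0 1)
            (hf.sq.intervalIntegrable 1 2)]
    _ = 2 * ∫ u in (0 : ℝ)..1, g u ^ 2 := by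
        rw [hhalf, ← two_mul, intervalIntegral.integral_congr fun u hu => congrArg (· ^ 2) (hfg hu)]

theorem autocorr_one_eq (hf : IsBVKernel V f) (hfg : Set.EqOn f g (Set.Icc 0 1)) {s : ℝ}
    (hrefl : ∀ x, f (2 - x) = s * f x) :
    autocorr f 1 = s * ∫ u in (0 : ℝ)..1, g u * g (1 - u) := by
  have hrev {u : ℝ} (hu : u ∈ Set.Icc (0 : ℝ) 1) : 1 - u ∈ Set.Icc (0 : ℝ) 1 :=
    ⟨by linarith [hu.2], by linarith [hu.1]⟩
  have hshift (u : ℝ) : f u * f (u + 1) = s * (f u * f (1 - u)) := by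
    rw [show u + 1 = 2 - (1 - u) by ring, hrefl]; ring
  have hzero : ∀ u ∉ Set.Icc (0 : ℝ) 1, f u * f (u + 1) = 0 := fun u hu => by
    rcases not_and_or.1 hu with hu | hu
    · rw [hf.apply_eq_zero fun h => hu h.1, zero_mul]
    · rw [hf.apply_eq_zero (x := u + 1) fun h => hu (by linarith [h.2]), mul_zero]
  rw [autocorr, ← setIntegral_eq_integral_of_forall_compl_eq_zero hzero,
    integral_Icc_eq_integral_Ioc, ← intervalIntegral.integral_of_le zero_le_one]
  simp only [hshift, intervalIntegral.integral_const_mul]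
  rw [intervalIntegral.integral_congr fun u hu => ?_]
  rw [Set.uIcc_of_le zero_le_one] at hu
  simp only [hfg hu, hfg (hrev hu)]

end IsBVKernel

end Autocorrelation

section GaussianMoments

theorem hasDerivAt_eval_mul_exp_sq (w : ℝ) (p : Polynomial ℝ) (t : ℝ) :
    HasDerivAt (fun t => p.eval t * Real.exp (w * t ^ 2 / 2))
      ((p.derivative + Polynomial.C w * Polynomial.X * p).eval t * Real.exp (w * t ^ 2 / 2)) t := by
  have hsq : HasDerivAt (fun t : ℝ => w * t ^ 2 / 2) (w * t) t := by
    convert! ((hasDerivAt_pow 2 t).const_mul w).div_const 2 using 1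
    push_cast
    ring
  convert! (p.hasDerivAt t).mul hsq.exp using 1
  simp only [Polynomial.eval_add, Polynomial.eval_mul, Polynomial.eval_C, Polynomial.eval_X]
  ring

theorem iteratedDeriv_exp_sq (w : ℝ) (n : ℕ) :
    iteratedDeriv n (fun t => Real.exp (w * t ^ 2 / 2)) = fun t =>
      ((fun p : Polynomial ℝ => p.derivative + Polynomial.C w * Polynomial.X * p)^[n] 1).eval t
        * Real.exp (w * t ^ 2 / 2) := by
  induction n with
  | zero => simp
  | succ n ih =>
    rw [iteratedDeriv_succ, ih, Function.iterate_succ_apply']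
    exact funext fun t => (hasDerivAt_eval_mul_exp_sq w _ t).deriv

theorem integral_pow_four_gaussianReal (v : ℝ≥0) :
    ∫ x, x ^ 4 ∂gaussianReal 0 v = 3 * (v : ℝ) ^ 2 := by
  have hmgf := iteratedDeriv_mgf_zero (X := fun x : ℝ => x) (μ := gaussianReal 0 v) (by simp) 4
  simp only [mgf_fun_id_gaussianReal, zero_mul, zero_add, iteratedDeriv_exp_sq] at hmgf
  refine hmgf.symm.trans ?_
  simp [Function.iterate_succ_apply', Polynomial.derivative_mul]
  ring

end GaussianMoments

/-- `X` is a centered, possibly degenerate, real Gaussian variable under `μ`. -/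
def IsCenteredGaussian {Ω : Type*} [MeasurableSpace Ω] (X : Ω → ℝ) (μ : Measure Ω) : Prop :=
  ∃ v : ℝ≥0, HasLaw X (gaussianReal 0 v) μ

namespace IsCenteredGaussian

variable {Ω : Type*} [MeasurableSpace Ω] {μ : Measure Ω} {X Y : Ω → ℝ}

theorem memLp (hX : IsCenteredGaussian X μ) (p : ℝ≥0) : MemLp X p μ := by
  obtain ⟨v, hv⟩ := hX
  have hid := memLp_id_gaussianReal (μ := 0) (v := v) p
  rwa [← hv.map_eq, memLp_map_measure_iff (by fun_prop) hv.aemeasurable] at hid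

theorem memLp_two (hX : IsCenteredGaussian X μ) : MemLp X 2 μ := hX.memLp 2

theorem memLp_sq (hX : IsCenteredGaussian X μ) : MemLp (fun ω => X ω ^ 2) 2 μ := by
  refine (memLp_two_iff_integrable_sq (hX.memLp_two.aestronglyMeasurable.pow 2)).2 ?_
  refine ((hX.memLp 4).integrable_norm_pow (by norm_num)).congr (ae_of_all _ fun ω => ?_)
  simp only [Pi.pow_apply, ← pow_mul, Real.norm_eq_abs]
  exact Even.pow_abs (by decide) _

theorem integrable_pow_four (hX : IsCenteredGaussian X μ) : Integrable (fun ω => X ω ^ 4) μ := by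
  simpa only [← pow_mul] using hX.memLp_sq.integrable_sq

theorem integral_eq_zero (hX : IsCenteredGaussian X μ) : ∫ ω, X ω ∂μ = 0 := by
  obtain ⟨v, hv⟩ := hX
  rw [hv.integral_eq, integral_id_gaussianReal]

theorem isProbabilityMeasure (hX : IsCenteredGaussian X μ) : IsProbabilityMeasure μ := by
  obtain ⟨v, hv⟩ := hX
  exact hv.isProbabilityMeasure

theorem integral_sq (hX : IsCenteredGaussian X μ) : ∫ ω, X ω ^ 2 ∂μ = Var[X; μ] :=
  (variance_of_integral_eq_zero hX.memLp_two.aestronglyMeasurable.aemeasurable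
    hX.integral_eq_zero).symm

theorem covariance_eq_integral (hX : IsCenteredGaussian X μ) (hY : IsCenteredGaussian Y μ) :
    cov[X, Y; μ] = ∫ ω, X ω * Y ω ∂μ := by
  simp only [covariance, hX.integral_eq_zero, hY.integral_eq_zero, sub_zero]

theorem integral_pow_four (hX : IsCenteredGaussian X μ) :
    ∫ ω, X ω ^ 4 ∂μ = 3 * Var[X; μ] ^ 2 := by
  obtain ⟨v, hv⟩ := hX
  rw [hv.variance_eq, variance_id_gaussianReal, ← integral_pow_four_gaussianReal]
  exact hv.integral_comp (f := fun x => x ^ 4) (by fun_prop)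

theorem covariance_sq_sq (hX : IsCenteredGaussian X μ) (hY : IsCenteredGaussian Y μ)
    (hadd : IsCenteredGaussian (fun ω => X ω + Y ω) μ)
    (hsub : IsCenteredGaussian (fun ω => X ω - Y ω) μ) :
    cov[fun ω => X ω ^ 2, fun ω => Y ω ^ 2; μ] = 2 * cov[X, Y; μ] ^ 2 := by
  have := hX.isProbabilityMeasure
  have hX4 := hX.integrable_pow_four
  have hY4 := hY.integrable_pow_four
  have hXY : Integrable (fun ω => X ω ^ 2 * Y ω ^ 2) μ := hX.memLp_sq.integrable_mul hY.memLp_sq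
  have hpolar : (∫ ω, (X ω + Y ω) ^ 4 ∂μ) + ∫ ω, (X ω - Y ω) ^ 4 ∂μ
      = 2 * (∫ ω, X ω ^ 4 ∂μ) + 2 * (∫ ω, Y ω ^ 4 ∂μ) + 12 * ∫ ω, X ω ^ 2 * Y ω ^ 2 ∂μ := by
    simp only [← integral_const_mul]
    rw [← integral_add hadd.integrable_pow_four hsub.integrable_pow_four,
      ← integral_add (hX4.const_mul 2) (hY4.const_mul 2),
      ← integral_add (by exact (hX4.const_mul 2).add (hY4.const_mul 2)) (hXY.const_mul 12)]
    exact integral_congr_ae (ae_of_all _ fun ω => by ring)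
  rw [hadd.integral_pow_four, hsub.integral_pow_four, hX.integral_pow_four, hY.integral_pow_four,
    variance_fun_add hX.memLp_two hY.memLp_two,
    variance_fun_sub hX.memLp_two hY.memLp_two] at hpolar
  rw [covariance_eq_sub hX.memLp_sq hY.memLp_sq, hX.integral_sq, hY.integral_sq]
  simp only [Pi.mul_apply]
  linear_combination -hpolar / 12

end IsCenteredGaussian

theorem variance_sum_mul_sq {Ω ι : Type*} [MeasurableSpace Ω] {μ : Measure Ω} [IsFiniteMeasure μ]
    {H : Submodule ℝ (Ω → ℝ)} (hH : ∀ X ∈ H, IsCenteredGaussian X μ) {s : Finset ι}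
    {X : ι → Ω → ℝ} (hX : ∀ i ∈ s, X i ∈ H) (w : ι → ℝ) :
    Var[fun ω => ∑ i ∈ s, w i * X i ω ^ 2; μ]
      = 2 * ∑ i ∈ s, ∑ j ∈ s, w i * w j * cov[X i, X j; μ] ^ 2 := by
  rw [variance_fun_sum' (X := fun i ω => w i * X i ω ^ 2)
    fun i hi => (hH _ (hX i hi)).memLp_sq.const_mul (w i), Finset.mul_sum]
  refine Finset.sum_congr rfl fun i hi => ?_
  rw [Finset.mul_sum]
  refine Finset.sum_congr rfl fun j hj => ?_
  rw [covariance_const_mul_left, covariance_const_mul_right,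
    (hH _ (hX i hi)).covariance_sq_sq (hH _ (hX j hj)) (hH _ (H.add_mem (hX i hi) (hX j hj)))
      (hH _ (H.sub_mem (hX i hi) (hX j hj)))]
  ring

section MeanSquaredError

theorem covariance_sq_le_variance_mul {Ω : Type*} [MeasurableSpace Ω] {μ : Measure Ω}
    [IsFiniteMeasure μ] {X Y : Ω → ℝ} (hX : MemLp X 2 μ) (hY : MemLp Y 2 μ) :
    cov[X, Y; μ] ^ 2 ≤ Var[X; μ] * Var[Y; μ] := by
  have hnonneg (t : ℝ) : 0 ≤ Var[Y; μ] * (t * t) + 2 * cov[X, Y; μ] * t + Var[X; μ] := by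
    have hvar := variance_nonneg (fun ω => X ω + t * Y ω) μ
    rw [variance_fun_add (Y := fun ω => t * Y ω) hX (hY.const_mul t), variance_const_mul,
      covariance_const_mul_right] at hvar
    linarith
  have hdiscrim := discrim_le_zero hnonneg
  rw [discrim] at hdiscrim
  linarith

theorem integral_sub_sub_const_sq {Ω : Type*} [MeasurableSpace Ω] {μ : Measure Ω}
    [IsProbabilityMeasure μ] {A B : Ω → ℝ} (hA : MemLp A 2 μ) (hB : MemLp B 2 μ) (θ : ℝ) :
    ∫ ω, (A ω - B ω - θ) ^ 2 ∂μ = Var[A; μ] - 2 * cov[A, B; μ] + Var[B; μ]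
      + ((∫ ω, A ω ∂μ) - (∫ ω, B ω ∂μ) - θ) ^ 2 := by
  have hAB : MemLp (fun ω => A ω - B ω) 2 μ := hA.sub hB
  have hABθ : MemLp (fun ω => A ω - B ω - θ) 2 μ := hAB.sub (memLp_const θ)
  have hmean : ∫ ω, (A ω - B ω - θ) ∂μ = (∫ ω, A ω ∂μ) - (∫ ω, B ω ∂μ) - θ := by
    rw [integral_sub (hAB.integrable one_le_two) (integrable_const θ),
      integral_sub (hA.integrable one_le_two) (hB.integrable one_le_two), integral_const,
      probReal_univ, one_smul]
  rw [← variance_fun_sub hA hB, ← variance_sub_const hAB.aestronglyMeasurable θ,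
    variance_eq_sub hABθ, hmean]
  simp only [Pi.pow_apply, sub_add_cancel]

theorem tendsto_mul_integral_sub_sub_const_sq {ι : Type*} {l : Filter ι} {Ω : ι → Type*}
    [∀ n, MeasurableSpace (Ω n)] {μ : ∀ n, Measure (Ω n)} [∀ n, IsProbabilityMeasure (μ n)]
    {A B : ∀ n, Ω n → ℝ} {r : ι → ℝ} {θ L : ℝ} (hA : ∀ᶠ n in l, MemLp (A n) 2 (μ n))
    (hB : ∀ᶠ n in l, MemLp (B n) 2 (μ n))
    (hvarA : Filter.Tendsto (fun n => r n * Var[A n; μ n]) l (𝓝 L))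
    (hvarB : Filter.Tendsto (fun n => r n * Var[B n; μ n]) l (𝓝 0))
    (hbias : Filter.Tendsto
      (fun n => r n * ((∫ ω, A n ω ∂μ n) - (∫ ω, B n ω ∂μ n) - θ) ^ 2) l (𝓝 0)) :
    Filter.Tendsto (fun n => r n * ∫ ω, (A n ω - B n ω - θ) ^ 2 ∂μ n) l (𝓝 L) := by
  have hcov : Filter.Tendsto (fun n => r n * cov[A n, B n; μ n]) l (𝓝 0) := by
    have hprod : Filter.Tendsto
        (fun n => √((r n * Var[A n; μ n]) * (r n * Var[B n; μ n]))) l (𝓝 0) := by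
      simpa only [mul_zero, Real.sqrt_zero] using (hvarA.mul hvarB).sqrt
    refine squeeze_zero_norm' ?_ hprod
    filter_upwards [hA, hB] with n hAn hBn
    refine Real.abs_le_sqrt ?_
    calc (r n * cov[A n, B n; μ n]) ^ 2 = r n ^ 2 * cov[A n, B n; μ n] ^ 2 := mul_pow ..
      _ ≤ r n ^ 2 * (Var[A n; μ n] * Var[B n; μ n]) := by
          gcongr
          exact covariance_sq_le_variance_mul hAn hBn
      _ = (r n * Var[A n; μ n]) * (r n * Var[B n; μ n]) := by ring
  have hsum := ((hvarA.sub (hcov.const_mul 2)).add hvarB).add hbias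
  rw [mul_zero, sub_zero, add_zero, add_zero] at hsum
  refine hsum.congr' ?_
  filter_upwards [hA, hB] with n hAn hBn
  rw [integral_sub_sub_const_sq hAn hBn]
  ring

end MeanSquaredError

section Model

variable {Ω : Type*} {n : ℕ} {W η : ℕ → Ω → ℝ} {σ τ : ℝ} {j k : ℕ}

/-- The Gaussian space of the model, spanned by the grid values of `W` and `η` up to time `n`. -/
def gaussianSpace (n : ℕ) (W η : ℕ → Ω → ℝ) : Submodule ℝ (Ω → ℝ) :=
  Submodule.span ℝ (W '' Set.Iic n ∪ η '' Set.Iic n)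

theorem mem_gaussianSpace_left (hj : j ≤ n) : W j ∈ gaussianSpace n W η :=
  Submodule.subset_span (Or.inl (Set.mem_image_of_mem W hj))

theorem mem_gaussianSpace_right (hj : j ≤ n) : η j ∈ gaussianSpace n W η :=
  Submodule.subset_span (Or.inr (Set.mem_image_of_mem η hj))

theorem obs_mem_gaussianSpace (hj : j ≤ n) : obs σ τ W η j ∈ gaussianSpace n W η :=
  Submodule.add_mem _ (Submodule.smul_mem _ σ (mem_gaussianSpace_left hj))
    (Submodule.smul_mem _ τ (mem_gaussianSpace_right hj))

theorem increment_mem_gaussianSpace (hj : j ≤ n) :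
    (fun ω => obs σ τ W η j ω - obs σ τ W η (j - 1) ω) ∈ gaussianSpace n W η :=
  Submodule.sub_mem _ (obs_mem_gaussianSpace hj) (obs_mem_gaussianSpace ((j.sub_le 1).trans hj))

theorem preAvg_obs_mem_gaussianSpace (f : ℝ → ℝ) (m i : ℕ) :
    preAvg f n m (obs σ τ W η) i ∈ gaussianSpace n W η := by
  have heq : preAvg f n m (obs σ τ W η) i = ((m : ℝ) / n) • ∑ j ∈ blockIdx n m i,
      f ((m : ℝ) * j / n - ((i : ℝ) - 2)) • obs σ τ W η j := by
    ext ω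
    simp only [preAvg, Pi.smul_apply, Finset.sum_apply, smul_eq_mul]
  rw [heq]
  refine Submodule.smul_mem _ _ (Submodule.sum_mem _ fun j hj => Submodule.smul_mem _ _ ?_)
  exact obs_mem_gaussianSpace
    (Nat.lt_succ_iff.1 (Finset.mem_range.1 (Finset.mem_of_mem_filter j hj)))

theorem exists_eq_sum_of_mem_gaussianSpace {X : Ω → ℝ} (hX : X ∈ gaussianSpace n W η) :
    ∃ a b : ℕ → ℝ, X = fun ω => ∑ j ∈ Finset.range (n + 1), (a j * W j ω + b j * η j ω) := by
  refine Submodule.span_induction ?_ ⟨0, 0, ?_⟩ ?_ ?_ hX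
  · rintro _ (⟨j, hj, rfl⟩ | ⟨j, hj, rfl⟩)
    · refine ⟨Pi.single j 1, 0, funext fun ω => ?_⟩
      simp [Pi.single_apply, Nat.lt_succ_of_le (Set.mem_Iic.1 hj)]
    · refine ⟨0, Pi.single j 1, funext fun ω => ?_⟩
      simp [Pi.single_apply, Nat.lt_succ_of_le (Set.mem_Iic.1 hj)]
  · ext ω
    simp
  · rintro _ _ - - ⟨a, b, rfl⟩ ⟨a', b', rfl⟩
    refine ⟨a + a', b + b', funext fun ω => ?_⟩
    simp only [Pi.add_apply, ← Finset.sum_add_distrib]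
    exact Finset.sum_congr rfl fun j _ => by ring
  · rintro r _ - ⟨a, b, rfl⟩
    refine ⟨r • a, r • b, funext fun ω => ?_⟩
    simp only [Pi.smul_apply, smul_eq_mul, Finset.mul_sum]
    exact Finset.sum_congr rfl fun j _ => by ring

/-- The covariance of two increments `Y_j - Y_{j-1}` of the observations, as a function of the
distance `d` of their indices. -/
noncomputable def incrementCov (σ τ : ℝ) (n : ℕ) (d : ℝ) : ℝ :=
  if d = 0 then σ ^ 2 / n + 2 * τ ^ 2 else if |d| = 1 then -τ ^ 2 else 0

namespace IsSimplifiedModel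

variable [MeasureSpace Ω]

theorem isCenteredGaussian (hmod : IsSimplifiedModel n W η) {X : Ω → ℝ}
    (hX : X ∈ gaussianSpace n W η) : IsCenteredGaussian X ℙ := by
  obtain ⟨hW, hη, hlaw, -⟩ := hmod
  obtain ⟨a, b, rfl⟩ := exists_eq_sum_of_mem_gaussianSpace hX
  obtain ⟨v, hv⟩ := hlaw a b
  exact ⟨v, (by fun_prop), hv⟩

theorem covariance_obs [IsFiniteMeasure (ℙ : Measure Ω)] (hmod : IsSimplifiedModel n W η)
    (hj : j ≤ n) (hk : k ≤ n) :
    cov[obs σ τ W η j, obs σ τ W η k; ℙ]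
      = σ ^ 2 / n * min (j : ℝ) k + τ ^ 2 * if j = k then 1 else 0 := by
  have hW {l : ℕ} (hl : l ≤ n) := hmod.isCenteredGaussian (mem_gaussianSpace_left (η := η) hl)
  have hη {l : ℕ} (hl : l ≤ n) := hmod.isCenteredGaussian (mem_gaussianSpace_right (W := W) hl)
  have hσW {l : ℕ} (hl : l ≤ n) : MemLp (fun ω => σ * W l ω) 2 ℙ := (hW hl).memLp_two.const_mul σ
  have hτη {l : ℕ} (hl : l ≤ n) : MemLp (fun ω => τ * η l ω) 2 ℙ := (hη hl).memLp_two.const_mul τ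
  obtain ⟨-, -, -, hWW, hηη, hWη⟩ := hmod
  have hηW : cov[η j, W k; ℙ] = 0 := by
    rw [covariance_comm, (hW hk).covariance_eq_integral (hη hj), hWη k j hk hj]
  have hobs (l : ℕ) : obs σ τ W η l = (fun ω => σ * W l ω) + fun ω => τ * η l ω := rfl
  rw [hobs, hobs, covariance_add_left (hσW hj) (hτη hj) ((hσW hk).add (hτη hk)),
    covariance_add_right (hσW hj) (hσW hk) (hτη hk),
    covariance_add_right (hτη hj) (hσW hk) (hτη hk)]
  simp only [covariance_const_mul_left, covariance_const_mul_right, hηW,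
    (hW hj).covariance_eq_integral (hW hk), (hW hj).covariance_eq_integral (hη hk),
    (hη hj).covariance_eq_integral (hη hk), hWW j k hj hk, hηη j k hj hk, hWη j k hj hk]
  ring

theorem covariance_increment [IsFiniteMeasure (ℙ : Measure Ω)] (hmod : IsSimplifiedModel n W η)
    (hj : j ∈ Finset.Icc 1 n) (hk : k ∈ Finset.Icc 1 n) :
    cov[fun ω => obs σ τ W η j ω - obs σ τ W η (j - 1) ω,
      fun ω => obs σ τ W η k ω - obs σ τ W η (k - 1) ω; ℙ] = incrementCov σ τ n ((j : ℝ) - k) := by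
  have hL2 {l : ℕ} (hl : l ≤ n) : MemLp (obs σ τ W η l) 2 ℙ :=
    (hmod.isCenteredGaussian (obs_mem_gaussianSpace hl)).memLp_two
  obtain ⟨j, rfl⟩ := Nat.exists_eq_add_of_le' (Finset.mem_Icc.1 hj).1
  obtain ⟨k, rfl⟩ := Nat.exists_eq_add_of_le' (Finset.mem_Icc.1 hk).1
  have hj' : j + 1 ≤ n := (Finset.mem_Icc.1 hj).2
  have hk' : k + 1 ≤ n := (Finset.mem_Icc.1 hk).2
  have hj : j ≤ n := by lia
  have hk : k ≤ n := by lia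
  simp only [Nat.add_sub_cancel]
  rw [covariance_fun_sub_fun_sub (hL2 hj') (hL2 hj) (hL2 hk') (hL2 hk), hmod.covariance_obs hj' hk',
    hmod.covariance_obs hj' hk, hmod.covariance_obs hj hk', hmod.covariance_obs hj hk, incrementCov]
  simp only [Nat.cast_add, Nat.cast_one, add_sub_add_right_eq_sub, add_left_inj, sub_eq_zero,
    Nat.cast_inj]
  rcases lt_trichotomy j k with hlt | rfl | hgt
  · have hle : (j : ℝ) + 1 ≤ k := by exact_mod_cast hlt
    have hadj : |(j : ℝ) - k| = 1 ↔ j + 1 = k := by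
      rw [abs_of_nonpos (by linarith), neg_sub, sub_eq_iff_eq_add', eq_comm]
      exact_mod_cast Iff.rfl
    rw [min_eq_left (by linarith), min_eq_left hle, min_eq_left (by linarith),
      min_eq_left (by linarith), if_neg (by lia : ¬j = k + 1)]
    simp only [hadj, hlt.ne, if_false]
    split_ifs <;> ring
  · simp only [if_true, if_neg j.lt_succ_self.ne, if_neg j.lt_succ_self.ne', min_self,
      min_eq_left (lt_add_one (j : ℝ)).le, min_eq_right (lt_add_one (j : ℝ)).le]
    ring
  · have hle : (k : ℝ) + 1 ≤ j := by exact_mod_cast hgt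
    have hadj : |(j : ℝ) - k| = 1 ↔ j = k + 1 := by
      rw [abs_of_nonneg (by linarith), sub_eq_iff_eq_add']
      exact_mod_cast Iff.rfl
    rw [min_eq_right (by linarith), min_eq_right (by linarith), min_eq_right hle,
      min_eq_right (by linarith), if_neg (by lia : ¬j + 1 = k)]
    simp only [hadj, hgt.ne', if_false]
    split_ifs <;> ring

end IsSimplifiedModel

end Model

section Grid

variable {Ω : Type*} {V : ℝ≥0} {f : ℝ → ℝ} {n m i j l p : ℕ}

/-- The position of the time `j / n` in the `i`-th block `[(i - 2) / m, i / m]`, measured from the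
left end of the block in units of `1 / m`; the block corresponds to the positions in `[0, 2]`. -/
noncomputable def blockCoord (n m i j : ℕ) : ℝ := (m : ℝ) * j / n - ((i : ℝ) - 2)

theorem blockCoord_add_nat (k : ℕ) :
    blockCoord n m i (j + k) = blockCoord n m i j + k * ((m : ℝ) / n) := by
  rw [blockCoord, blockCoord]
  push_cast
  ring

theorem blockCoord_eq_add (n m i l j : ℕ) :
    blockCoord n m l j = blockCoord n m i j + ((i : ℝ) - l) := by
  rw [blockCoord, blockCoord]
  ring

theorem blockCoord_zero_nonpos (hi : 2 ≤ i) : blockCoord n m i 0 ≤ 0 := by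
  have hi' : (2 : ℝ) ≤ i := by exact_mod_cast hi
  simpa only [blockCoord, Nat.cast_zero, mul_zero, zero_div, zero_sub, neg_sub, sub_nonpos]

theorem two_le_blockCoord_self (hn : n ≠ 0) (hi : i ≤ m) : 2 ≤ blockCoord n m i n := by
  have hi' : (i : ℝ) ≤ m := by exact_mod_cast hi
  rw [blockCoord, mul_div_cancel_right₀ _ (Nat.cast_ne_zero.2 hn)]
  linarith

theorem two_le_blockCoord_zero_add (hn : n ≠ 0) (hi : i ≤ m) :
    2 ≤ blockCoord n m i 0 + (n + 1 : ℕ) * ((m : ℝ) / n) := by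
  have hh : (0 : ℝ) ≤ (m : ℝ) / n := by positivity
  rw [← blockCoord_add_nat, zero_add, blockCoord_add_nat, Nat.cast_one, one_mul]
  linarith [two_le_blockCoord_self hn hi]

theorem blockCoord_mem_Icc (j : ℕ) :
    blockCoord n m i j ∈ Set.Icc (blockCoord n m i 0 + j * ((m : ℝ) / n))
      (blockCoord n m i 0 + (j + 1) * ((m : ℝ) / n)) := by
  have hh : (0 : ℝ) ≤ (m : ℝ) / n := by positivity
  rw [← Nat.cast_add_one, ← blockCoord_add_nat, ← blockCoord_add_nat, zero_add, zero_add,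
    Set.left_mem_Icc, blockCoord_add_nat, Nat.cast_one, one_mul]
  linarith

theorem mem_blockIdx_iff (hn : n ≠ 0) (hm : m ≠ 0) :
    j ∈ blockIdx n m i ↔ j ≤ n ∧ blockCoord n m i j ∈ Set.Icc 0 2 := by
  have hn' : (0 : ℝ) < n := by positivity
  have hm' : (0 : ℝ) < m := by positivity
  rw [blockIdx, Finset.mem_filter, Finset.mem_range, Nat.lt_succ_iff, Set.mem_Icc,
    div_le_div_iff₀ hm' hn', div_le_div_iff₀ hn' hm', blockCoord, sub_nonneg, le_div_iff₀ hn',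
    sub_le_iff_le_add, add_sub_cancel, div_le_iff₀ hn', mul_comm (m : ℝ) j]

theorem preAvg_congr {g : ℝ → ℝ} (hn : n ≠ 0) (hm : m ≠ 0) (hfg : Set.EqOn f g (Set.Icc 0 2)) :
    preAvg (Ω := Ω) f n m = preAvg g n m := by
  ext A i ω
  rw [preAvg, preAvg]
  congr 1
  refine Finset.sum_congr rfl fun j hj => ?_
  rw [← blockCoord, hfg ((mem_blockIdx_iff hn hm).1 hj).2]

theorem biasCorr_congr {g : ℝ → ℝ} (hn : n ≠ 0) (hm : m ≠ 0)
    (hfg : Set.EqOn f g (Set.Icc 0 2)) : biasCorr (Ω := Ω) f n m = biasCorr g n m := by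
  ext A i ω
  rw [biasCorr, biasCorr]
  congr 1
  refine Finset.sum_congr rfl fun j hj => ?_
  rw [← blockCoord, hfg ((mem_blockIdx_iff hn hm).1 (Finset.mem_of_mem_filter j hj)).2]

namespace IsBVKernel

theorem preAvg_eq_sum (hf : IsBVKernel V f) (hn : n ≠ 0) (hm : m ≠ 0) (A : ℕ → Ω → ℝ) (i : ℕ)
    (ω : Ω) : preAvg f n m A i ω
      = ∑ j ∈ Finset.range (n + 1), (m : ℝ) / n * f (blockCoord n m i j) * A j ω := by
  have hsub : blockIdx n m i ⊆ Finset.range (n + 1) := Finset.filter_subset _ _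
  simp only [preAvg, Finset.mul_sum, ← mul_assoc]
  refine Finset.sum_subset hsub fun j hj hj' => ?_
  rw [mem_blockIdx_iff hn hm, not_and] at hj'
  rw [← blockCoord, hf.apply_eq_zero (hj' (Nat.lt_succ_iff.1 (Finset.mem_range.1 hj))), mul_zero,
    zero_mul]

theorem biasCorr_eq_sum (hf : IsBVKernel V f) (hn : n ≠ 0) (hm : m ≠ 0) (A : ℕ → Ω → ℝ) (i : ℕ)
    (ω : Ω) : biasCorr f n m A i ω
      = ∑ j ∈ Finset.Icc 1 n, ((m : ℝ) / n) ^ 2 / 2 * f (blockCoord n m i j) ^ 2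
          * (A j ω - A (j - 1) ω) ^ 2 := by
  have hsub : (blockIdx n m i).filter (1 ≤ ·) ⊆ Finset.Icc 1 n := fun j hj => by
    rw [Finset.mem_filter, mem_blockIdx_iff hn hm] at hj
    exact Finset.mem_Icc.2 ⟨hj.2, hj.1.1⟩
  have hscale : (m : ℝ) ^ 2 / (2 * n ^ 2) = ((m : ℝ) / n) ^ 2 / 2 := by ring
  simp only [biasCorr, hscale, Finset.mul_sum, ← mul_assoc]
  refine Finset.sum_subset hsub fun j hj hj' => ?_
  rw [Finset.mem_Icc] at hj
  rw [Finset.mem_filter, mem_blockIdx_iff hn hm] at hj'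
  rw [← blockCoord, hf.apply_eq_zero fun hmem => hj' ⟨⟨hj.2, hmem⟩, hj.1⟩, zero_pow two_ne_zero,
    mul_zero, zero_mul]

theorem sum_biasCorr_eq_sum (hf : IsBVKernel V f) (hn : n ≠ 0) (hm : m ≠ 0)
    (A : ℕ → Ω → ℝ) (ω : Ω) :
    ∑ i ∈ Finset.Icc 2 m, biasCorr f n m A i ω
      = ∑ j ∈ Finset.Icc 1 n, ((m : ℝ) / n) ^ 2 / 2
          * (∑ i ∈ Finset.Icc 2 m, f (blockCoord n m i j) ^ 2) * (A j ω - A (j - 1) ω) ^ 2 := by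
  simp only [hf.biasCorr_eq_sum hn hm]
  rw [Finset.sum_comm]
  simp only [Finset.mul_sum, Finset.sum_mul]

theorem abs_tail_sum_sub_bigLam_le (hf : IsBVKernel V f) (hint : ∫ x, f x = 0) (hn : n ≠ 0)
    (hi : i ≤ m) (hp : p ≤ n) :
    |(m : ℝ) / n * ∑ j ∈ Finset.Ioc p n, f (blockCoord n m i j) - bigLam f (blockCoord n m i p)|
      ≤ (m : ℝ) / n * V := by
  have hh : (0 : ℝ) ≤ (m : ℝ) / n := by positivity
  have hend : blockCoord n m i p + (n - p : ℕ) * ((m : ℝ) / n) = blockCoord n m i n := by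
    rw [← blockCoord_add_nat, Nat.add_sub_cancel' hp]
  have hsum : ∑ j ∈ Finset.Ioc p n, f (blockCoord n m i j)
      = ∑ j ∈ Finset.range (n - p), f (blockCoord n m i (p + (j + 1))) := by
    rw [← Finset.Ico_add_one_add_one_eq_Ioc, Finset.sum_Ico_eq_sum_range, Nat.add_sub_add_right]
    exact Finset.sum_congr rfl fun j _ => by rw [add_right_comm, add_assoc]
  rw [hsum, hf.bigLam_eq_integral hint (two_le_blockCoord_self hn hi), ← hend]
  refine abs_mul_sum_sub_integral_le_of_eVariationOn_le hh
    ((eVariationOn.mono f (Set.subset_univ _)).trans hf.eVariationOn_le) fun j _ => ?_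
  rw [blockCoord_add_nat, Nat.cast_add_one, Set.right_mem_Icc]
  gcongr
  linarith

theorem abs_grid_sum_sub_integral_le (hf : IsBVKernel V f) (hn : n ≠ 0)
    (hi : i ∈ Finset.Icc 2 m) :
    |(m : ℝ) / n * ∑ j ∈ Finset.range (n + 1), f (blockCoord n m i j) - ∫ x, f x|
      ≤ (m : ℝ) / n * V :=
  hf.abs_mul_sum_sub_integral_le (by positivity)
    (blockCoord_zero_nonpos (Finset.mem_Icc.1 hi).1)
    (two_le_blockCoord_zero_add hn (Finset.mem_Icc.1 hi).2)
    fun j _ => blockCoord_mem_Icc j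

theorem mul_grid_sum_abs_le (hf : IsBVKernel V f) (hn : n ≠ 0) (hi : i ∈ Finset.Icc 2 m) :
    (m : ℝ) / n * ∑ j ∈ Finset.range (n + 1), |f (blockCoord n m i j)|
      ≤ (2 + (m : ℝ) / n) * V :=
  hf.mul_sum_abs_le (by positivity) (blockCoord_zero_nonpos (Finset.mem_Icc.1 hi).1)
    (two_le_blockCoord_zero_add hn (Finset.mem_Icc.1 hi).2)
    fun j _ => blockCoord_mem_Icc j

theorem abs_grid_sum_Icc_sub_integral_le (hf : IsBVKernel V f) (hn : n ≠ 0)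
    (hi : i ∈ Finset.Icc 2 m) :
    |(m : ℝ) / n * ∑ j ∈ Finset.Icc 1 n, f (blockCoord n m i j) - ∫ x, f x|
      ≤ (m : ℝ) / n * V := by
  have hh : (0 : ℝ) ≤ (m : ℝ) / n := by positivity
  have hend : 2 ≤ blockCoord n m i 0 + n * ((m : ℝ) / n) := by
    rw [← blockCoord_add_nat, zero_add]
    exact two_le_blockCoord_self hn (Finset.mem_Icc.1 hi).2
  rw [← Finset.Ico_add_one_right_eq_Icc, Finset.sum_Ico_eq_sum_range, Nat.add_sub_cancel]
  refine hf.abs_mul_sum_sub_integral_le hh (blockCoord_zero_nonpos (Finset.mem_Icc.1 hi).1) hend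
    fun j _ => ?_
  rw [← Nat.cast_add_one, ← blockCoord_add_nat, ← blockCoord_add_nat, zero_add, zero_add,
    add_comm 1 j, Set.right_mem_Icc, blockCoord_add_nat, Nat.cast_one, one_mul]
  linarith

end IsBVKernel

end Grid

section PreAverageCovariance

variable {Ω : Type*} [MeasureSpace Ω] [IsFiniteMeasure (ℙ : Measure Ω)] {V V' : ℝ≥0}
  {f : ℝ → ℝ} {σ τ : ℝ} {n m i l : ℕ} {W η : ℕ → Ω → ℝ}

theorem sum_sum_mul_mul_min (a b : ℕ → ℝ) (n : ℕ) :
    ∑ j ∈ Finset.range (n + 1), ∑ k ∈ Finset.range (n + 1), a j * b k * min (j : ℝ) k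
      = ∑ p ∈ Finset.range (n + 1),
          (∑ j ∈ Finset.Ioc p n, a j) * ∑ k ∈ Finset.Ioc p n, b k := by
  have hmin {j k : ℕ} (hj : j ∈ Finset.range (n + 1)) : min (j : ℝ) k
      = ∑ p ∈ Finset.range (n + 1), (if p < j then 1 else 0) * if p < k then 1 else 0 := by
    have hfilter : (Finset.range (n + 1)).filter (fun p => p < j ∧ p < k)
        = Finset.range (min j k) := by
      ext p
      simp only [Finset.mem_filter, Finset.mem_range, lt_min_iff] at hj ⊢
      lia
    simp only [ite_zero_mul_ite_zero, mul_one]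
    rw [Finset.sum_boole, hfilter, Finset.card_range, Nat.cast_min]
  have htail (g : ℕ → ℝ) (p : ℕ) : ∑ j ∈ Finset.Ioc p n, g j
      = ∑ j ∈ Finset.range (n + 1), g j * if p < j then 1 else 0 := by
    simp only [mul_ite, mul_one, mul_zero, ← Finset.sum_filter]
    congr 1
    ext j
    simp only [Finset.mem_Ioc, Finset.mem_filter, Finset.mem_range]
    lia
  simp only [htail, Finset.sum_mul_sum]
  symm
  rw [Finset.sum_comm]
  refine Finset.sum_congr rfl fun j hj => ?_
  rw [Finset.sum_comm]
  refine Finset.sum_congr rfl fun k _ => ?_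
  rw [hmin hj, Finset.mul_sum]
  exact Finset.sum_congr rfl fun p _ => by ring

theorem abs_sum_mul_sub_sum_mul_le {ι : Type*} {s : Finset ι} {a a' b b' : ι → ℝ} {ε : ℝ}
    (ha : ∀ p ∈ s, |a p - a' p| ≤ ε) (hb : ∀ p ∈ s, |b p - b' p| ≤ ε) :
    |∑ p ∈ s, a p * b p - ∑ p ∈ s, a' p * b' p|
      ≤ ε * (∑ p ∈ s, |a' p| + ∑ p ∈ s, |b' p|) + s.card * ε ^ 2 := by
  have hterm (p : ι) (hp : p ∈ s) :
      |a p * b p - a' p * b' p| ≤ ε * (|a' p| + |b' p|) + ε ^ 2 := by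
    have hε : 0 ≤ ε := (abs_nonneg _).trans (ha p hp)
    calc |a p * b p - a' p * b' p|
        = |a' p * (b p - b' p) + (a p - a' p) * b' p + (a p - a' p) * (b p - b' p)| := by
          congr 1; ring
      _ ≤ |a' p| * |b p - b' p| + |a p - a' p| * |b' p| + |a p - a' p| * |b p - b' p| := by
          simpa only [abs_mul] using abs_add_three (a' p * (b p - b' p)) ((a p - a' p) * b' p)
            ((a p - a' p) * (b p - b' p))
      _ ≤ |a' p| * ε + ε * |b' p| + ε * ε := by
          gcongr <;> first | exact ha p hp | exact hb p hp
      _ = ε * (|a' p| + |b' p|) + ε ^ 2 := by ring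
  calc |∑ p ∈ s, a p * b p - ∑ p ∈ s, a' p * b' p|
      ≤ ∑ p ∈ s, |a p * b p - a' p * b' p| := by
        rw [← Finset.sum_sub_distrib]
        exact Finset.abs_sum_le_sum_abs _ _
    _ ≤ ∑ p ∈ s, (ε * (|a' p| + |b' p|) + ε ^ 2) := Finset.sum_le_sum hterm
    _ = ε * (∑ p ∈ s, |a' p| + ∑ p ∈ s, |b' p|) + s.card * ε ^ 2 := by
        rw [Finset.sum_add_distrib, ← Finset.mul_sum, Finset.sum_add_distrib, Finset.sum_const,
          nsmul_eq_mul]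

/-- The leading term of the covariance of two pre-averaged observations of a kernel `f`, as a
function of the distance `d` of their blocks. -/
noncomputable def preAvgCov (σ τ : ℝ) (f : ℝ → ℝ) (n m : ℕ) (d : ℝ) : ℝ :=
  σ ^ 2 / m * autocorr (bigLam f) d + τ ^ 2 * (m / n) * autocorr f d

/-- Bound for the distance of the covariance of two pre-averaged observations from `preAvgCov`, for
a kernel of variation `V` whose antiderivative has variation `V'`. -/
noncomputable def preAvgCovError (σ τ : ℝ) (V V' : ℝ≥0) (n m : ℕ) : ℝ :=
  2 * σ ^ 2 * (3 * V * V' + V' ^ 2) / n + 2 * (σ ^ 2 + τ ^ 2) * V ^ 2 * (m / n) ^ 2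

theorem IsSimplifiedModel.covariance_preAvg (hmod : IsSimplifiedModel n W η)
    (hf : IsBVKernel V f) (hn : n ≠ 0) (hm : m ≠ 0) (i l : ℕ) :
    cov[preAvg f n m (obs σ τ W η) i, preAvg f n m (obs σ τ W η) l; ℙ]
      = σ ^ 2 / n * ∑ p ∈ Finset.range (n + 1),
            ((m : ℝ) / n * ∑ j ∈ Finset.Ioc p n, f (blockCoord n m i j))
              * ((m : ℝ) / n * ∑ j ∈ Finset.Ioc p n, f (blockCoord n m l j))
        + τ ^ 2 * (m / n) * ((m : ℝ) / n * ∑ j ∈ Finset.range (n + 1),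
            f (blockCoord n m i j) * f (blockCoord n m l j)) := by
  have hL2 (i : ℕ) (j : ℕ) (hj : j ∈ Finset.range (n + 1)) :
      MemLp (fun ω => (m : ℝ) / n * f (blockCoord n m i j) * obs σ τ W η j ω) 2 ℙ :=
    (hmod.isCenteredGaussian (obs_mem_gaussianSpace (Finset.mem_range_succ_iff.1 hj))).memLp_two
      |>.const_mul _
  have hpreAvg (i : ℕ) : preAvg f n m (obs σ τ W η) i = fun ω => ∑ j ∈ Finset.range (n + 1),
      (m : ℝ) / n * f (blockCoord n m i j) * obs σ τ W η j ω :=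
    funext fun ω => hf.preAvg_eq_sum hn hm _ i ω
  have hcov (j : ℕ) (hj : j ∈ Finset.range (n + 1)) (k : ℕ) (hk : k ∈ Finset.range (n + 1)) :
      cov[fun ω => (m : ℝ) / n * f (blockCoord n m i j) * obs σ τ W η j ω,
        fun ω => (m : ℝ) / n * f (blockCoord n m l k) * obs σ τ W η k ω; ℙ]
      = σ ^ 2 / n * ((m / n * f (blockCoord n m i j)) * (m / n * f (blockCoord n m l k))
          * min (j : ℝ) k) + (if j = k then τ ^ 2 * (m / n) * (m / n)
            * (f (blockCoord n m i j) * f (blockCoord n m l k)) else 0) := by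
    rw [covariance_const_mul_left, covariance_const_mul_right, hmod.covariance_obs
      (Finset.mem_range_succ_iff.1 hj) (Finset.mem_range_succ_iff.1 hk)]
    split_ifs <;> ring
  rw [hpreAvg, hpreAvg, covariance_fun_sum_fun_sum' (hL2 i) (hL2 l),
    Finset.sum_congr rfl fun j hj => Finset.sum_congr rfl (hcov j hj)]
  simp only [Finset.sum_add_distrib, ← Finset.mul_sum]
  rw [sum_sum_mul_mul_min]
  simp only [Finset.mul_sum]
  congr 1
  refine Finset.sum_congr rfl fun j hj => ?_
  rw [Finset.sum_ite_eq, if_pos hj]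
  ring

theorem IsBVKernel.abs_mul_grid_sum_mul_sub_autocorr_le (hf : IsBVKernel V f) (hn : n ≠ 0)
    (hi : i ∈ Finset.Icc 2 m) (l : ℕ) :
    |(m : ℝ) / n * ∑ p ∈ Finset.range (n + 1), f (blockCoord n m i p) * f (blockCoord n m l p)
      - autocorr f ((i : ℝ) - l)| ≤ (m : ℝ) / n * (2 * V ^ 2) := by
  simp only [blockCoord_eq_add n m i l]
  exact_mod_cast (hf.mul_comp_add ((i : ℝ) - l)).abs_grid_sum_sub_integral_le hn hi

theorem IsBVKernel.abs_sum_tail_mul_tail_sub_le (hf : IsBVKernel V f)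
    (hΛ : IsBVKernel V' (bigLam f)) (hint : ∫ x, f x = 0) (hmn : m ≤ n)
    (hi : i ∈ Finset.Icc 2 m) (hl : l ∈ Finset.Icc 2 m) :
    |∑ p ∈ Finset.range (n + 1), ((m : ℝ) / n * ∑ j ∈ Finset.Ioc p n, f (blockCoord n m i j))
          * ((m : ℝ) / n * ∑ j ∈ Finset.Ioc p n, f (blockCoord n m l j))
        - ∑ p ∈ Finset.range (n + 1),
            bigLam f (blockCoord n m i p) * bigLam f (blockCoord n m l p)|
      ≤ 6 * V * V' + 2 * n * (m / n) ^ 2 * V ^ 2 := by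
  have hi' := Finset.mem_Icc.1 hi
  have hn : n ≠ 0 := by lia
  have hh : (m : ℝ) / n ≤ 1 := div_le_one_of_le₀ (by exact_mod_cast hmn) n.cast_nonneg
  have hn1 : (1 : ℝ) ≤ n := by exact_mod_cast Nat.one_le_iff_ne_zero.2 hn
  have htail {i : ℕ} (hi : i ∈ Finset.Icc 2 m) (p : ℕ) (hp : p ∈ Finset.range (n + 1)) :=
    hf.abs_tail_sum_sub_bigLam_le hint hn (Finset.mem_Icc.1 hi).2 (Finset.mem_range_succ_iff.1 hp)
  have habs {i : ℕ} (hi : i ∈ Finset.Icc 2 m) :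
      (m : ℝ) / n * ∑ p ∈ Finset.range (n + 1), |bigLam f (blockCoord n m i p)| ≤ 3 * V' := by
    refine (hΛ.mul_grid_sum_abs_le hn hi).trans ?_
    gcongr
    linarith
  refine (abs_sum_mul_sub_sum_mul_le (htail hi) (htail hl)).trans ?_
  rw [Finset.card_range, Nat.cast_add_one]
  calc _ = V * ((m : ℝ) / n * ∑ p ∈ Finset.range (n + 1), |bigLam f (blockCoord n m i p)|
          + m / n * ∑ p ∈ Finset.range (n + 1), |bigLam f (blockCoord n m l p)|)
          + (n + 1) * (m / n) ^ 2 * V ^ 2 := by ring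
    _ ≤ V * (3 * V' + 3 * V') + (n + n) * (m / n) ^ 2 * V ^ 2 := by
        refine add_le_add (mul_le_mul_of_nonneg_left (add_le_add (habs hi) (habs hl))
          V.coe_nonneg) ?_
        gcongr
    _ = 6 * V * V' + 2 * n * (m / n) ^ 2 * V ^ 2 := by ring

theorem IsSimplifiedModel.abs_covariance_preAvg_sub_le (hmod : IsSimplifiedModel n W η)
    (hf : IsBVKernel V f) (hΛ : IsBVKernel V' (bigLam f)) (hint : ∫ x, f x = 0) (hmn : m ≤ n)
    (hi : i ∈ Finset.Icc 2 m) (hl : l ∈ Finset.Icc 2 m) :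
    |cov[preAvg f n m (obs σ τ W η) i, preAvg f n m (obs σ τ W η) l; ℙ]
        - preAvgCov σ τ f n m ((i : ℝ) - l)|
      ≤ preAvgCovError σ τ V V' n m := by
  have hi' := Finset.mem_Icc.1 hi
  have hn : n ≠ 0 := by lia
  have hm : m ≠ 0 := by lia
  have hW := hf.abs_sum_tail_mul_tail_sub_le hΛ hint hmn hi hl
  have hΛΛ := hΛ.abs_mul_grid_sum_mul_sub_autocorr_le hn hi l
  have hff := hf.abs_mul_grid_sum_mul_sub_autocorr_le hn hi l
  rw [hmod.covariance_preAvg hf hn hm, preAvgCov, preAvgCovError]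
  set A := ∑ p ∈ Finset.range (n + 1), ((m : ℝ) / n * ∑ j ∈ Finset.Ioc p n,
    f (blockCoord n m i j)) * ((m : ℝ) / n * ∑ j ∈ Finset.Ioc p n, f (blockCoord n m l j))
  set B := ∑ p ∈ Finset.range (n + 1), bigLam f (blockCoord n m i p) * bigLam f (blockCoord n m l p)
  set D := (m : ℝ) / n * ∑ j ∈ Finset.range (n + 1), f (blockCoord n m i j) * f (blockCoord n m l j)
  set αΛ := autocorr (bigLam f) ((i : ℝ) - l)
  set αf := autocorr f ((i : ℝ) - l)
  have hn' : (n : ℝ) ≠ 0 := Nat.cast_ne_zero.2 hn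
  have hm' : (m : ℝ) ≠ 0 := Nat.cast_ne_zero.2 hm
  calc |σ ^ 2 / n * A + τ ^ 2 * (m / n) * D - (σ ^ 2 / m * αΛ + τ ^ 2 * (m / n) * αf)|
      = |σ ^ 2 / n * (A - B) + σ ^ 2 / m * (m / n * B - αΛ) + τ ^ 2 * (m / n) * (D - αf)| := by
        congr 1
        field_simp
        ring
    _ ≤ σ ^ 2 / n * |A - B| + σ ^ 2 / m * |m / n * B - αΛ| + τ ^ 2 * (m / n) * |D - αf| := by
        refine (abs_add_three _ _ _).trans_eq ?_
        simp only [abs_mul, abs_of_nonneg (show 0 ≤ σ ^ 2 / n by positivity),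
          abs_of_nonneg (show 0 ≤ σ ^ 2 / m by positivity),
          abs_of_nonneg (show 0 ≤ τ ^ 2 * (m / n) by positivity)]
    _ ≤ σ ^ 2 / n * (6 * V * V' + 2 * n * (m / n) ^ 2 * V ^ 2)
          + σ ^ 2 / m * (m / n * (2 * V' ^ 2)) + τ ^ 2 * (m / n) * (m / n * (2 * V ^ 2)) := by
        gcongr
    _ = _ := by
        field_simp
        ring

end PreAverageCovariance

section BandedCovariance

variable {φ : ℝ → ℝ} {a b : ℕ}

theorem sum_sum_eq_of_banded (heven : ∀ d, φ (-d) = φ d) (hband : ∀ d, 2 ≤ d → φ d = 0)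
    (hab : a ≤ b) :
    ∑ i ∈ Finset.Icc a b, ∑ l ∈ Finset.Icc a b, φ ((i : ℝ) - l)
      = ((b : ℝ) - a + 1) * φ 0 + 2 * ((b : ℝ) - a) * φ 1 := by
  induction b, hab using Nat.le_induction with
  | base => simp
  | succ b hab ih =>
    have hrow : ∑ l ∈ Finset.Icc a b, φ (((b + 1 : ℕ) : ℝ) - l) = φ 1 := by
      rw [Finset.sum_eq_single_of_mem b (Finset.right_mem_Icc.2 hab), Nat.cast_add_one,
        add_sub_cancel_left]
      intro l hl hlb
      have hlt : (l : ℝ) + 1 ≤ b := by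
        exact_mod_cast lt_of_le_of_ne (Finset.mem_Icc.1 hl).2 hlb
      refine hband _ ?_
      push_cast
      linarith
    have hcol : ∑ l ∈ Finset.Icc a b, φ ((l : ℝ) - (b + 1 : ℕ)) = φ 1 := by
      rw [← hrow]
      exact Finset.sum_congr rfl fun l _ => by rw [← heven, neg_sub]
    simp only [Finset.sum_Icc_succ_top (hab.trans b.le_succ), Finset.sum_add_distrib, ih, hrow,
      hcol, sub_self]
    push_cast
    ring

theorem abs_variance_sum_sq_sub_le {Ω : Type*} [MeasurableSpace Ω] {μ : Measure Ω}
    [IsFiniteMeasure μ] {H : Submodule ℝ (Ω → ℝ)} (hH : ∀ X ∈ H, IsCenteredGaussian X μ)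
    {X : ℕ → Ω → ℝ} (hX : ∀ i ∈ Finset.Icc a b, X i ∈ H) (heven : ∀ d, φ (-d) = φ d)
    (hband : ∀ d, 2 ≤ d → φ d = 0) (hab : a ≤ b) {ε : ℝ}
    (hcov : ∀ i ∈ Finset.Icc a b, ∀ l ∈ Finset.Icc a b,
      |cov[X i, X l; μ] - φ ((i : ℝ) - l)| ≤ ε) :
    |Var[fun ω => ∑ i ∈ Finset.Icc a b, X i ω ^ 2; μ]
        - 2 * (((b : ℝ) - a + 1) * φ 0 ^ 2 + 2 * ((b : ℝ) - a) * φ 1 ^ 2)|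
      ≤ 4 * ε * (((b : ℝ) - a + 1) * |φ 0| + 2 * ((b : ℝ) - a) * |φ 1|)
        + 2 * ((b : ℝ) - a + 1) ^ 2 * ε ^ 2 := by
  have hvar := variance_sum_mul_sq hH hX fun _ => 1
  have hcov' : ∀ p ∈ Finset.Icc a b ×ˢ Finset.Icc a b,
      |cov[X p.1, X p.2; μ] - φ ((p.1 : ℝ) - p.2)| ≤ ε := fun p hp =>
    hcov p.1 (Finset.mem_product.1 hp).1 p.2 (Finset.mem_product.1 hp).2
  have hcard : ((Finset.Icc a b ×ˢ Finset.Icc a b).card : ℝ) = ((b : ℝ) - a + 1) ^ 2 := by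
    rw [Finset.card_product, Nat.card_Icc, Nat.cast_mul, Nat.cast_sub (hab.trans b.le_succ),
      Nat.cast_add_one]
    ring
  have hsq := sum_sum_eq_of_banded (φ := fun d => φ d ^ 2) (fun d => by rw [heven])
    (fun d hd => by rw [hband d hd, zero_pow two_ne_zero]) hab
  have habs := sum_sum_eq_of_banded (φ := fun d => |φ d|) (fun d => by rw [heven])
    (fun d hd => by rw [hband d hd, abs_zero]) hab
  have hmain := abs_sum_mul_sub_sum_mul_le hcov' hcov'
  simp only [hcard, Finset.sum_product, habs, ← pow_two, hsq] at hmain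
  simp only [one_mul, mul_one] at hvar
  rw [hvar, ← mul_sub, abs_mul, abs_two]
  linarith

end BandedCovariance

theorem incrementCov_zero (σ τ : ℝ) (n : ℕ) :
    incrementCov σ τ n 0 = σ ^ 2 / n + 2 * τ ^ 2 :=
  if_pos rfl

theorem incrementCov_one (σ τ : ℝ) (n : ℕ) : incrementCov σ τ n 1 = -τ ^ 2 := by
  rw [incrementCov, if_neg one_ne_zero, if_pos abs_one]

theorem incrementCov_neg (σ τ : ℝ) (n : ℕ) (d : ℝ) :
    incrementCov σ τ n (-d) = incrementCov σ τ n d := by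
  simp only [incrementCov, neg_eq_zero, abs_neg]

theorem incrementCov_eq_zero {σ τ d : ℝ} {n : ℕ} (hd : 2 ≤ d) : incrementCov σ τ n d = 0 := by
  rw [incrementCov, if_neg (by linarith), if_neg (by rw [abs_of_nonneg] <;> linarith)]

section BiasCorrection

variable {Ω : Type*} [MeasureSpace Ω] {V V' : ℝ≥0} {f : ℝ → ℝ} {σ τ : ℝ} {n m i : ℕ}
  {W η : ℕ → Ω → ℝ}

theorem card_filter_blockCoord_mem_le (n m j : ℕ) :
    ((Finset.Icc 2 m).filter fun i => blockCoord n m i j ∈ Set.Icc 0 2).card ≤ 3 := by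
  have hsub : ((Finset.Icc 2 m).filter fun i => blockCoord n m i j ∈ Set.Icc 0 2)
      ⊆ Finset.Icc ⌈(m : ℝ) * j / n⌉₊ (⌊(m : ℝ) * j / n⌋₊ + 2) := fun i hi => by
    have hmem := (Finset.mem_filter.1 hi).2
    rw [blockCoord, Set.mem_Icc] at hmem
    rw [Finset.mem_Icc, ← Nat.floor_add_ofNat (by positivity)]
    exact ⟨Nat.ceil_le.2 (by linarith), Nat.le_floor (by linarith)⟩
  refine (Finset.card_le_card hsub).trans ?_
  have hle := Nat.floor_le_ceil ((m : ℝ) * j / n)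
  rw [Nat.card_Icc]
  lia

theorem IsBVKernel.sum_apply_blockCoord_sq_le (hf : IsBVKernel V f) (n m j : ℕ) :
    ∑ i ∈ Finset.Icc 2 m, f (blockCoord n m i j) ^ 2 ≤ 3 * V ^ 2 := by
  rw [← Finset.sum_filter_of_ne (p := fun i => blockCoord n m i j ∈ Set.Icc 0 2) fun i _ hi =>
    by_contra fun hmem => hi (by rw [hf.apply_eq_zero hmem, zero_pow two_ne_zero])]
  refine (Finset.sum_le_card_nsmul _ _ ((V : ℝ) ^ 2) fun i _ => ?_).trans ?_
  · exact sq_le_sq.2 (by simpa only [NNReal.abs_eq] using hf.abs_apply_le _)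
  · rw [nsmul_eq_mul]
    gcongr
    exact_mod_cast card_filter_blockCoord_mem_le n m j

namespace IsSimplifiedModel

theorem isCenteredGaussian_increment (hmod : IsSimplifiedModel n W η) {j : ℕ}
    (hj : j ∈ Finset.Icc 1 n) :
    IsCenteredGaussian (fun ω => obs σ τ W η j ω - obs σ τ W η (j - 1) ω) ℙ :=
  hmod.isCenteredGaussian (increment_mem_gaussianSpace (Finset.mem_Icc.1 hj).2)

theorem memLp_biasCorr (hmod : IsSimplifiedModel n W η) (hf : IsBVKernel V f) (hn : n ≠ 0)
    (hm : m ≠ 0) (i : ℕ) : MemLp (biasCorr f n m (obs σ τ W η) i) 2 ℙ := by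
  rw [funext (hf.biasCorr_eq_sum hn hm (obs σ τ W η) i)]
  exact memLp_finsetSum _ fun j hj =>
    (hmod.isCenteredGaussian_increment hj).memLp_sq.const_mul _

variable [IsFiniteMeasure (ℙ : Measure Ω)]

theorem integral_biasCorr (hmod : IsSimplifiedModel n W η) (hf : IsBVKernel V f) (hn : n ≠ 0)
    (hm : m ≠ 0) (i : ℕ) :
    ∫ ω, biasCorr f n m (obs σ τ W η) i ω = (m : ℝ) / n / 2 * (σ ^ 2 / n + 2 * τ ^ 2)
      * ((m : ℝ) / n * ∑ j ∈ Finset.Icc 1 n, f (blockCoord n m i j) ^ 2) := by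
  have hsq {j : ℕ} (hj : j ∈ Finset.Icc 1 n) :
      ∫ ω, (obs σ τ W η j ω - obs σ τ W η (j - 1) ω) ^ 2 = σ ^ 2 / n + 2 * τ ^ 2 := by
    have hinc := hmod.isCenteredGaussian_increment (σ := σ) (τ := τ) hj
    rw [hinc.integral_sq, ← covariance_self hinc.memLp_two.aestronglyMeasurable.aemeasurable,
      hmod.covariance_increment hj hj, sub_self, incrementCov_zero]
  simp only [hf.biasCorr_eq_sum hn hm]
  rw [integral_finsetSum _ fun j hj =>
    (hmod.isCenteredGaussian_increment hj).memLp_two.integrable_sq.const_mul _]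
  simp only [integral_const_mul, Finset.mul_sum]
  refine Finset.sum_congr rfl fun j hj => ?_
  rw [hsq hj]
  ring

theorem abs_integral_biasCorr_sub_le (hmod : IsSimplifiedModel n W η) (hf : IsBVKernel V f)
    (hn : n ≠ 0) (hi : i ∈ Finset.Icc 2 m) :
    |(∫ ω, biasCorr f n m (obs σ τ W η) i ω)
        - m / n / 2 * (σ ^ 2 / n + 2 * τ ^ 2) * autocorr f 0|
      ≤ (m / n) ^ 2 * (σ ^ 2 / n + 2 * τ ^ 2) * V ^ 2 := by
  have hi' := Finset.mem_Icc.1 hi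
  have hgrid := hf.sq.abs_grid_sum_Icc_sub_integral_le hn hi
  have hscale : (0 : ℝ) ≤ m / n / 2 * (σ ^ 2 / n + 2 * τ ^ 2) := by positivity
  rw [hmod.integral_biasCorr hf hn (by lia), ← mul_sub, abs_mul, abs_of_nonneg hscale]
  simp only [autocorr, add_zero, ← pow_two]
  refine (mul_le_mul_of_nonneg_left hgrid hscale).trans_eq ?_
  push_cast
  ring

theorem abs_integral_preAvg_sq_sub_integral_biasCorr_sub_le (hmod : IsSimplifiedModel n W η)
    (hf : IsBVKernel V f) (hn : n ≠ 0) (hi : i ∈ Finset.Icc 2 m) {ε : ℝ}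
    (hcov : |cov[preAvg f n m (obs σ τ W η) i, preAvg f n m (obs σ τ W η) i; ℙ]
      - preAvgCov σ τ f n m 0| ≤ ε) :
    |(∫ ω, preAvg f n m (obs σ τ W η) i ω ^ 2) - (∫ ω, biasCorr f n m (obs σ τ W η) i ω)
        - σ ^ 2 / m * autocorr (bigLam f) 0|
      ≤ ε + m / n * (σ ^ 2 / n) / 2 * |autocorr f 0|
        + (m / n) ^ 2 * (σ ^ 2 / n + 2 * τ ^ 2) * V ^ 2 := by
  have hgauss := hmod.isCenteredGaussian (preAvg_obs_mem_gaussianSpace (σ := σ) (τ := τ) f m i)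
  have hbias := hmod.abs_integral_biasCorr_sub_le (σ := σ) (τ := τ) hf hn hi
  rw [hgauss.integral_sq, ← covariance_self hgauss.memLp_two.aestronglyMeasurable.aemeasurable]
  set C := cov[preAvg f n m (obs σ τ W η) i, preAvg f n m (obs σ τ W η) i; ℙ]
  set B := ∫ ω, biasCorr f n m (obs σ τ W η) i ω
  have hshrink : |m / n * (σ ^ 2 / n) / 2 * autocorr f 0|
      = m / n * (σ ^ 2 / n) / 2 * |autocorr f 0| := by
    rw [abs_mul, abs_of_nonneg (by positivity)]
  calc |C - B - σ ^ 2 / m * autocorr (bigLam f) 0|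
      = |(C - preAvgCov σ τ f n m 0) - m / n * (σ ^ 2 / n) / 2 * autocorr f 0
          - (B - m / n / 2 * (σ ^ 2 / n + 2 * τ ^ 2) * autocorr f 0)| := by
        rw [preAvgCov]
        congr 1
        ring
    _ ≤ |C - preAvgCov σ τ f n m 0| + |m / n * (σ ^ 2 / n) / 2 * autocorr f 0|
          + |B - m / n / 2 * (σ ^ 2 / n + 2 * τ ^ 2) * autocorr f 0| :=
        (abs_sub _ _).trans (add_le_add_left (abs_sub _ _) _)
    _ ≤ _ := add_le_add (add_le_add hcov hshrink.le) hbias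

theorem variance_sum_biasCorr_le (hmod : IsSimplifiedModel n W η) (hf : IsBVKernel V f)
    (hn : n ≠ 0) (hm : m ≠ 0) :
    Var[fun ω => ∑ i ∈ Finset.Icc 2 m, biasCorr f n m (obs σ τ W η) i ω; ℙ]
      ≤ 9 / 2 * ((m : ℝ) / n) ^ 4 * V ^ 4
        * (n * (σ ^ 2 / n + 2 * τ ^ 2) ^ 2 + 2 * (n - 1) * τ ^ 4) := by
  let w (j : ℕ) : ℝ := ((m : ℝ) / n) ^ 2 / 2 * ∑ i ∈ Finset.Icc 2 m, f (blockCoord n m i j) ^ 2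
  have hw_nonneg (j : ℕ) : 0 ≤ w j := by positivity
  have hw_le (j : ℕ) : w j ≤ ((m : ℝ) / n) ^ 2 / 2 * (3 * V ^ 2) :=
    mul_le_mul_of_nonneg_left (hf.sum_apply_blockCoord_sq_le n m j) (by positivity)
  have hband := sum_sum_eq_of_banded (φ := fun d => incrementCov σ τ n d ^ 2)
    (fun d => by rw [incrementCov_neg])
    (fun d hd => by rw [incrementCov_eq_zero hd, zero_pow two_ne_zero])
    (Nat.one_le_iff_ne_zero.2 hn)
  have hvar := variance_sum_mul_sq (fun X hX => hmod.isCenteredGaussian hX) (s := Finset.Icc 1 n)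
    (fun j hj => increment_mem_gaussianSpace (σ := σ) (τ := τ) (Finset.mem_Icc.1 hj).2) w
  rw [funext (hf.sum_biasCorr_eq_sum hn hm _), hvar]
  calc _ ≤ 2 * ∑ j ∈ Finset.Icc 1 n, ∑ k ∈ Finset.Icc 1 n,
        (((m : ℝ) / n) ^ 2 / 2 * (3 * V ^ 2)) ^ 2 * incrementCov σ τ n ((j : ℝ) - k) ^ 2 := by
        refine mul_le_mul_of_nonneg_left (Finset.sum_le_sum fun j hj =>
          Finset.sum_le_sum fun k hk => ?_) zero_le_two
        rw [hmod.covariance_increment hj hk, pow_two (_ * _)]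
        exact mul_le_mul_of_nonneg_right
          (mul_le_mul (hw_le j) (hw_le k) (hw_nonneg k) (by positivity)) (sq_nonneg _)
    _ = _ := by
        simp only [← Finset.mul_sum, hband, incrementCov_zero, incrementCov_one]
        push_cast
        ring

end IsSimplifiedModel

end BiasCorrection

section Asymptotics

open Filter

theorem tendsto_inv_sqrt_natCast : Tendsto (fun n : ℕ => (√n)⁻¹) atTop (𝓝 0) :=
  tendsto_inv_atTop_zero.comp (tendsto_sqrt_atTop.comp tendsto_natCast_atTop_atTop)

theorem tendsto_mOf_div_sqrt {c : ℝ} (hc : 0 < c) :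
    Tendsto (fun n : ℕ => (mOf c n : ℝ) / √n) atTop (𝓝 c) := by
  have hsqrt : Tendsto (fun n : ℕ => √(n : ℝ)) atTop atTop :=
    tendsto_sqrt_atTop.comp tendsto_natCast_atTop_atTop
  have hratio : Tendsto (fun n : ℕ => √(n : ℝ) / ⌊√(n : ℝ) / c⌋₊) atTop (𝓝 c) := by
    have hfloor := (tendsto_nat_floor_div_atTop (R := ℝ)).comp (hsqrt.atTop_div_const hc)
    have hinv := (hfloor.inv₀ one_ne_zero).const_mul c
    rw [inv_one, mul_one] at hinv
    refine hinv.congr fun n => ?_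
    rw [Function.comp_apply, inv_div, ← mul_div_assoc, mul_div_cancel₀ _ hc.ne']
  have hlower := hratio.sub tendsto_inv_sqrt_natCast
  rw [sub_zero] at hlower
  have hdiv (n : ℕ) : √(n : ℝ) / ⌊√(n : ℝ) / c⌋₊ = (n : ℝ) / ⌊√(n : ℝ) / c⌋₊ / √n := by
    rw [div_right_comm, Real.div_sqrt]
  refine tendsto_of_tendsto_of_tendsto_of_le_of_le hlower hratio (fun n => ?_) fun n => ?_
  · have hlt := Nat.lt_floor_add_one ((n : ℝ) / ⌊√(n : ℝ) / c⌋₊)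
    rw [Nat.floor_div_eq_div] at hlt
    simp only [hdiv, ← one_div, ← sub_div, mOf]
    gcongr
    linarith
  · simp only [hdiv, mOf]
    gcongr
    exact Nat.cast_div_le

variable {m : ℕ → ℕ} {c : ℝ}

theorem eventually_two_le_and_le_of_tendsto_div_sqrt (hc : 0 < c)
    (hm : Tendsto (fun n : ℕ => (m n : ℝ) / √n) atTop (𝓝 c)) :
    ∀ᶠ n in atTop, 2 ≤ m n ∧ m n ≤ n := by
  have hsqrt : Tendsto (fun n : ℕ => √(n : ℝ)) atTop atTop :=
    tendsto_sqrt_atTop.comp tendsto_natCast_atTop_atTop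
  filter_upwards [hm.eventually_const_lt (half_lt_self hc), hm.eventually_lt_const (lt_add_one c),
    hsqrt.eventually_ge_atTop (4 / c), hsqrt.eventually_ge_atTop (c + 1),
    hsqrt.eventually_gt_atTop 0] with n hgt hlt hge hge' hpos
  rw [lt_div_iff₀ hpos] at hgt
  rw [div_lt_iff₀ hpos] at hlt
  rw [div_le_iff₀ hc] at hge
  have hsq : √(n : ℝ) * √n = n := Real.mul_self_sqrt n.cast_nonneg
  constructor <;> rw [← Nat.cast_le (α := ℝ)]
  · push_cast
    linarith
  · calc (m n : ℝ) ≤ (c + 1) * √n := hlt.le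
      _ ≤ √n * √n := by gcongr
      _ = n := hsq

theorem tendsto_sqrt_mul_of_abs_sub_banded_le
    (hm : Tendsto (fun n : ℕ => (m n : ℝ) / √n) atTop (𝓝 c)) {v a₀ a₁ ε : ℕ → ℝ} {g₀ g₁ E : ℝ}
    (h₀ : Tendsto (fun n : ℕ => √n * a₀ n) atTop (𝓝 g₀))
    (h₁ : Tendsto (fun n : ℕ => √n * a₁ n) atTop (𝓝 g₁))
    (hε : Tendsto (fun n : ℕ => n * ε n) atTop (𝓝 E))
    (hv : ∀ᶠ n in atTop, |v n - 2 * (((m n : ℝ) - 2 + 1) * a₀ n ^ 2 + 2 * (m n - 2) * a₁ n ^ 2)|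
      ≤ 4 * ε n * ((m n - 2 + 1) * |a₀ n| + 2 * (m n - 2) * |a₁ n|)
        + 2 * (m n - 2 + 1) ^ 2 * ε n ^ 2) :
    Tendsto (fun n : ℕ => √n * v n) atTop (𝓝 (2 * c * (g₀ ^ 2 + 2 * g₁ ^ 2))) := by
  have hinv := tendsto_inv_sqrt_natCast
  have hm₁ := hm.sub hinv
  have hm₂ := hm.sub (hinv.const_mul 2)
  have hmain := (((hm₁.mul (h₀.pow 2)).add ((hm₂.mul (h₁.pow 2)).const_mul 2)).const_mul 2)
  have herr := hinv.mul (((hε.mul ((hm₁.mul h₀.abs).add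
    ((hm₂.mul h₁.abs).const_mul 2))).const_mul 4).add (((hm₁.mul hε).pow 2).const_mul 2))
  rw [zero_mul] at herr
  suffices hlim : Tendsto (fun n : ℕ => √n * v n) atTop
      (𝓝 (2 * ((c - 0) * g₀ ^ 2 + 2 * ((c - 2 * 0) * g₁ ^ 2)))) by
    convert hlim using 2
    ring
  refine tendsto_of_tendsto_of_dist hmain
    (squeeze_zero' (.of_forall fun _ => dist_nonneg) ?_ herr)
  filter_upwards [hv, eventually_gt_atTop 0] with n hvn hn
  have hs : 0 < √(n : ℝ) := Real.sqrt_pos.2 (Nat.cast_pos.2 hn)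
  have hsq : (n : ℝ) = √n ^ 2 := (Real.sq_sqrt n.cast_nonneg).symm
  generalize √(n : ℝ) = s at hs hsq ⊢
  rw [dist_comm, Real.dist_eq]
  simp only [hsq, abs_mul, abs_of_pos hs]
  calc |s * v n - _| = s * |v n - 2 * (((m n : ℝ) - 2 + 1) * a₀ n ^ 2
        + 2 * (m n - 2) * a₁ n ^ 2)| := by
        rw [← abs_of_pos hs, ← abs_mul, abs_of_pos hs]
        congr 1
        field_simp
        ring
    _ ≤ _ := mul_le_mul_of_nonneg_left hvn hs.le
    _ = _ := by
        field_simp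
        ring

theorem abs_sum_Icc_two_sub_le {m : ℕ} {x : ℕ → ℝ} {θ δ : ℝ} (hm : 2 ≤ m)
    (hx : ∀ i ∈ Finset.Icc 2 m, |x i - θ / m| ≤ δ) :
    |(∑ i ∈ Finset.Icc 2 m, x i) - θ| ≤ |θ| / m + m * δ := by
  have hcard : ((Finset.Icc 2 m).card : ℝ) = m - 1 := by
    rw [Nat.card_Icc, show m + 1 - 2 = m - 1 by lia, Nat.cast_pred (by lia)]
  have hδ : 0 ≤ δ := (abs_nonneg _).trans (hx 2 (Finset.left_mem_Icc.2 hm))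
  have hm' : (m : ℝ) ≠ 0 := by positivity
  calc |(∑ i ∈ Finset.Icc 2 m, x i) - θ|
      = |(∑ i ∈ Finset.Icc 2 m, (x i - θ / m)) + -(θ / m)| := by
        rw [Finset.sum_sub_distrib, Finset.sum_const, nsmul_eq_mul, hcard]
        congr 1
        field_simp
        ring
    _ ≤ ∑ i ∈ Finset.Icc 2 m, |x i - θ / m| + |-(θ / m)| :=
        (abs_add_le _ _).trans (add_le_add_left (Finset.abs_sum_le_sum_abs _ _) _)
    _ ≤ (m - 1) * δ + |θ| / m := by
        rw [abs_neg, abs_div, Nat.abs_cast, ← hcard, ← nsmul_eq_mul]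
        gcongr
        exact Finset.sum_le_card_nsmul _ _ _ hx
    _ ≤ |θ| / m + m * δ := by linarith

theorem tendsto_sqrt_mul_sq_of_abs_le (hc : c ≠ 0)
    (hm : Tendsto (fun n : ℕ => (m n : ℝ) / √n) atTop (𝓝 c)) {b δ : ℕ → ℝ} {θ D : ℝ}
    (hδ : Tendsto (fun n : ℕ => n * δ n) atTop (𝓝 D))
    (hb : ∀ᶠ n in atTop, |b n| ≤ |θ| / m n + m n * δ n) :
    Tendsto (fun n : ℕ => √n * b n ^ 2) atTop (𝓝 0) := by
  have hbound := tendsto_inv_sqrt_natCast.mul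
    ((((tendsto_const_nhds (x := |θ|)).div hm hc).add (hm.mul hδ)).pow 2)
  rw [zero_mul] at hbound
  refine squeeze_zero' (.of_forall fun n => by positivity) ?_ hbound
  filter_upwards [hb, eventually_gt_atTop 0] with n hbn hn
  refine (mul_le_mul_of_nonneg_left (sq_le_sq' (neg_le_of_abs_le hbn) (le_of_abs_le hbn))
    (Real.sqrt_nonneg _)).trans_eq ?_
  have hs : 0 < √(n : ℝ) := Real.sqrt_pos.2 (Nat.cast_pos.2 hn)
  have hsq : (n : ℝ) = √n ^ 2 := (Real.sq_sqrt n.cast_nonneg).symm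
  simp only [Pi.div_apply]
  generalize √(n : ℝ) = s at hs hsq ⊢
  rw [hsq]
  field_simp

/-- The limit of `√n` times the leading covariance `preAvgCov` at distance `d` when the number of
blocks is asymptotic to `c * √n`. -/
noncomputable def limitPreAvgCov (σ τ : ℝ) (f : ℝ → ℝ) (c d : ℝ) : ℝ :=
  σ ^ 2 / c * autocorr (bigLam f) d + τ ^ 2 * c * autocorr f d

theorem tendsto_sqrt_mul_preAvgCov (hc : 0 < c)
    (hm : Tendsto (fun n : ℕ => (m n : ℝ) / √n) atTop (𝓝 c)) (σ τ : ℝ) (f : ℝ → ℝ) (d : ℝ) :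
    Tendsto (fun n : ℕ => √n * preAvgCov σ τ f n (m n) d) atTop
      (𝓝 (limitPreAvgCov σ τ f c d)) := by
  refine (((tendsto_const_nhds.div hm hc.ne').mul_const (autocorr (bigLam f) d)).add
    ((hm.const_mul (τ ^ 2)).mul_const (autocorr f d))).congr fun n => ?_
  have hsqrt : √(n : ℝ) * (m n / n) = m n / √n := by
    rw [mul_div_left_comm, Real.sqrt_div_self', mul_one_div]
  rw [preAvgCov, Pi.div_apply, div_div_eq_mul_div, ← hsqrt]
  ring

section Model

variable {Ω : ℕ → Type*} [∀ n, MeasureSpace (Ω n)] [∀ n, IsProbabilityMeasure (ℙ : Measure (Ω n))]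
  {W η : ∀ n, ℕ → Ω n → ℝ} {V V' : ℝ≥0} {f : ℝ → ℝ} {σ τ : ℝ}

theorem tendsto_natCast_mul_div_sq (hm : Tendsto (fun n : ℕ => (m n : ℝ) / √n) atTop (𝓝 c)) :
    Tendsto (fun n : ℕ => (n : ℝ) * ((m n : ℝ) / n) ^ 2) atTop (𝓝 (c ^ 2)) := by
  refine (hm.pow 2).congr' ?_
  filter_upwards [eventually_gt_atTop 0] with n hn
  rw [div_pow, Real.sq_sqrt n.cast_nonneg]
  field_simp

theorem tendsto_natCast_mul_preAvgCovError
    (hm : Tendsto (fun n : ℕ => (m n : ℝ) / √n) atTop (𝓝 c)) (σ τ : ℝ) (V V' : ℝ≥0) :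
    Tendsto (fun n : ℕ => n * preAvgCovError σ τ V V' n (m n)) atTop
      (𝓝 (2 * σ ^ 2 * (3 * V * V' + V' ^ 2) + 2 * (σ ^ 2 + τ ^ 2) * V ^ 2 * c ^ 2)) := by
  refine (((tendsto_natCast_mul_div_sq hm).const_mul (2 * (σ ^ 2 + τ ^ 2) * V ^ 2)).const_add
    (2 * σ ^ 2 * (3 * V * V' + V' ^ 2))).congr' ?_
  filter_upwards [eventually_gt_atTop 0] with n hn
  rw [preAvgCovError]
  field_simp

theorem tendsto_sqrt_mul_variance_sum_preAvg_sq (hmodel : ∀ n, IsSimplifiedModel n (W n) (η n))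
    (hf : IsBVKernel V f) (hΛ : IsBVKernel V' (bigLam f)) (hint : ∫ x, f x = 0) (hc : 0 < c)
    (hm : Tendsto (fun n : ℕ => (m n : ℝ) / √n) atTop (𝓝 c)) :
    Tendsto (fun n : ℕ => √n * Var[fun ω => ∑ i ∈ Finset.Icc 2 (m n),
        preAvg f n (m n) (obs σ τ (W n) (η n)) i ω ^ 2; ℙ]) atTop
      (𝓝 (2 * c * (limitPreAvgCov σ τ f c 0 ^ 2 + 2 * limitPreAvgCov σ τ f c 1 ^ 2))) := by
  refine tendsto_sqrt_mul_of_abs_sub_banded_le hm (tendsto_sqrt_mul_preAvgCov hc hm σ τ f 0)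
    (tendsto_sqrt_mul_preAvgCov hc hm σ τ f 1)
    (tendsto_natCast_mul_preAvgCovError hm σ τ V V') ?_
  filter_upwards [eventually_two_le_and_le_of_tendsto_div_sqrt hc hm] with n hmn
  have hgauss (i : ℕ) := preAvg_obs_mem_gaussianSpace (n := n) (W := W n) (η := η n) (σ := σ)
    (τ := τ) f (m n) i
  have heven (d : ℝ) : preAvgCov σ τ f n (m n) (-d) = preAvgCov σ τ f n (m n) d := by
    simp only [preAvgCov, autocorr_neg]
  have hband (d : ℝ) (hd : 2 ≤ d) : preAvgCov σ τ f n (m n) d = 0 := by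
    rw [preAvgCov, hΛ.autocorr_eq_zero hd, hf.autocorr_eq_zero hd, mul_zero, mul_zero, add_zero]
  exact abs_variance_sum_sq_sub_le (fun X hX => (hmodel n).isCenteredGaussian hX)
    (fun i _ => hgauss i) heven hband hmn.1
    fun i hi l hl => (hmodel n).abs_covariance_preAvg_sub_le hf hΛ hint hmn.2 hi hl

theorem tendsto_sqrt_mul_variance_sum_biasCorr (hmodel : ∀ n, IsSimplifiedModel n (W n) (η n))
    (hf : IsBVKernel V f) (hc : 0 < c)
    (hm : Tendsto (fun n : ℕ => (m n : ℝ) / √n) atTop (𝓝 c)) :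
    Tendsto (fun n : ℕ => √n * Var[fun ω => ∑ i ∈ Finset.Icc 2 (m n),
        biasCorr f n (m n) (obs σ τ (W n) (η n)) i ω; ℙ]) atTop (𝓝 0) := by
  have hinv : Tendsto (fun n : ℕ => (n : ℝ)⁻¹) atTop (𝓝 0) := tendsto_inv_atTop_nhds_zero_nat
  have hbound := tendsto_inv_sqrt_natCast.mul (((hm.pow 4).const_mul (9 / 2 * (V : ℝ) ^ 4)).mul
    ((((hinv.const_mul (σ ^ 2)).add_const (2 * τ ^ 2)).pow 2).add
      ((hinv.const_sub 1).const_mul (2 * τ ^ 4))))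
  rw [zero_mul] at hbound
  refine squeeze_zero' (.of_forall fun n =>
    mul_nonneg (Real.sqrt_nonneg _) (variance_nonneg _ _)) ?_ hbound
  filter_upwards [eventually_two_le_and_le_of_tendsto_div_sqrt hc hm] with n hmn
  have hn : n ≠ 0 := by lia
  refine (mul_le_mul_of_nonneg_left ((hmodel n).variance_sum_biasCorr_le hf hn (by lia))
    (Real.sqrt_nonneg _)).trans_eq ?_
  have hs : 0 < √(n : ℝ) := Real.sqrt_pos.2 (by positivity)
  have hsq : (n : ℝ) = √n ^ 2 := (Real.sq_sqrt n.cast_nonneg).symm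
  generalize √(n : ℝ) = s at hs hsq ⊢
  rw [hsq]
  field_simp

theorem tendsto_sqrt_mul_bias_sq (hmodel : ∀ n, IsSimplifiedModel n (W n) (η n))
    (hf : IsBVKernel V f) (hΛ : IsBVKernel V' (bigLam f)) (hint : ∫ x, f x = 0)
    (hnorm : autocorr (bigLam f) 0 = 1) (hc : 0 < c)
    (hm : Tendsto (fun n : ℕ => (m n : ℝ) / √n) atTop (𝓝 c)) :
    Tendsto (fun n : ℕ => √n *
      ((∫ ω, ∑ i ∈ Finset.Icc 2 (m n), preAvg f n (m n) (obs σ τ (W n) (η n)) i ω ^ 2)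
        - (∫ ω, ∑ i ∈ Finset.Icc 2 (m n), biasCorr f n (m n) (obs σ τ (W n) (η n)) i ω)
        - σ ^ 2) ^ 2) atTop (𝓝 0) := by
  let δ (n : ℕ) : ℝ := preAvgCovError σ τ V V' n (m n)
    + (m n : ℝ) / n * (σ ^ 2 / n) / 2 * |autocorr f 0|
    + ((m n : ℝ) / n) ^ 2 * (σ ^ 2 / n + 2 * τ ^ 2) * V ^ 2
  have hδ := ((tendsto_natCast_mul_preAvgCovError hm σ τ V V').add
    ((hm.mul tendsto_inv_sqrt_natCast).mul_const (σ ^ 2 / 2 * |autocorr f 0|))).add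
      ((tendsto_natCast_mul_div_sq hm).mul (((tendsto_inv_atTop_nhds_zero_nat.const_mul
        (σ ^ 2)).add_const (2 * τ ^ 2)).mul_const ((V : ℝ) ^ 2)))
  refine tendsto_sqrt_mul_sq_of_abs_le (δ := δ) (θ := σ ^ 2) hc.ne' hm (hδ.congr' ?_) ?_
  · filter_upwards [eventually_gt_atTop 0] with n hn
    have hsq : (√(n : ℝ))⁻¹ * (√n)⁻¹ = (n : ℝ)⁻¹ := by
      rw [← mul_inv, Real.mul_self_sqrt n.cast_nonneg]
    simp only [δ, div_eq_mul_inv, mul_assoc (m n : ℝ), hsq]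
    field_simp
  · filter_upwards [eventually_two_le_and_le_of_tendsto_div_sqrt hc hm] with n hmn
    have hn : n ≠ 0 := by lia
    have hgauss (i : ℕ) := (hmodel n).isCenteredGaussian
      (preAvg_obs_mem_gaussianSpace (σ := σ) (τ := τ) f (m n) i)
    rw [integral_finsetSum _ fun i _ => (hgauss i).memLp_two.integrable_sq,
      integral_finsetSum _ fun i _ =>
        ((hmodel n).memLp_biasCorr hf hn (by lia) i).integrable one_le_two,
      ← Finset.sum_sub_distrib]
    refine abs_sum_Icc_two_sub_le hmn.1 fun i hi => ?_
    have hbias := (hmodel n).abs_integral_preAvg_sq_sub_integral_biasCorr_sub_le hf hn hi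
      (by simpa only [sub_self] using
        (hmodel n).abs_covariance_preAvg_sub_le (σ := σ) (τ := τ) hf hΛ hint hmn.2 hi hi)
    rwa [hnorm, mul_one] at hbias

theorem tendsto_sqrt_mul_integral_sub_sq (hmodel : ∀ n, IsSimplifiedModel n (W n) (η n))
    (hf : IsBVKernel V f) (hΛ : IsBVKernel V' (bigLam f)) (hint : ∫ x, f x = 0)
    (hnorm : autocorr (bigLam f) 0 = 1) (hc : 0 < c)
    (hm : Tendsto (fun n : ℕ => (m n : ℝ) / √n) atTop (𝓝 c)) :
    Tendsto (fun n : ℕ => √n * ∫ ω, ((∑ i ∈ Finset.Icc 2 (m n),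
        (preAvg f n (m n) (obs σ τ (W n) (η n)) i ω ^ 2
          - biasCorr f n (m n) (obs σ τ (W n) (η n)) i ω)) - σ ^ 2) ^ 2) atTop
      (𝓝 (2 * c * (limitPreAvgCov σ τ f c 0 ^ 2 + 2 * limitPreAvgCov σ τ f c 1 ^ 2))) := by
  have hpreAvg (n : ℕ) : MemLp (fun ω => ∑ i ∈ Finset.Icc 2 (m n),
      preAvg f n (m n) (obs σ τ (W n) (η n)) i ω ^ 2) 2 ℙ :=
    memLp_finsetSum _ fun i _ => ((hmodel n).isCenteredGaussian
      (preAvg_obs_mem_gaussianSpace f (m n) i)).memLp_sq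
  have hbiasCorr : ∀ᶠ n in atTop, MemLp (fun ω => ∑ i ∈ Finset.Icc 2 (m n),
      biasCorr f n (m n) (obs σ τ (W n) (η n)) i ω) 2 ℙ := by
    filter_upwards [eventually_two_le_and_le_of_tendsto_div_sqrt hc hm] with n hmn
    exact memLp_finsetSum _ fun i _ => (hmodel n).memLp_biasCorr hf (by lia) (by lia) i
  simp only [Finset.sum_sub_distrib]
  exact tendsto_mul_integral_sub_sub_const_sq (.of_forall hpreAvg) hbiasCorr
    (tendsto_sqrt_mul_variance_sum_preAvg_sq hmodel hf hΛ hint hc hm)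
    (tendsto_sqrt_mul_variance_sum_biasCorr hmodel hf hc hm)
    (tendsto_sqrt_mul_bias_sq hmodel hf hΛ hint hnorm hc hm)

end Model

end Asymptotics

section PreAverageFunction

variable {V : ℝ≥0} {f lam : ℝ → ℝ}

theorem indicator_two_sub (hanti : ∀ t ∈ Set.Icc (0 : ℝ) 1, lam t = -lam (2 - t)) (x : ℝ) :
    (Set.Icc 0 2).indicator lam (2 - x) = -(Set.Icc 0 2).indicator lam x := by
  by_cases hx : x ∈ Set.Icc (0 : ℝ) 2
  · have hx' : 2 - x ∈ Set.Icc (0 : ℝ) 2 := ⟨by linarith [hx.2], by linarith [hx.1]⟩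
    rw [Set.indicator_of_mem hx, Set.indicator_of_mem hx']
    rcases le_total x 1 with h | h
    · rw [hanti x ⟨hx.1, h⟩, neg_neg]
    · rw [hanti (2 - x) ⟨hx'.1, by linarith⟩, sub_sub_cancel]
  · have hx' : 2 - x ∉ Set.Icc (0 : ℝ) 2 := fun h => hx ⟨by linarith [h.2], by linarith [h.1]⟩
    rw [Set.indicator_of_notMem hx, Set.indicator_of_notMem hx', neg_zero]

theorem bigLam_congr (hfg : Set.EqOn f lam (Set.Icc 0 2)) :
    Set.EqOn (bigLam f) (bigLam lam) (Set.Icc 0 2) := by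
  intro u hu
  rw [bigLam, bigLam, intervalIntegral.integral_congr fun v hv => ?_]
  rw [Set.uIcc_of_le hu.1] at hv
  exact hfg ⟨hv.1, hv.2.trans hu.2⟩

theorem IsBVKernel.autocorr_bigLam_zero_eq (hf : IsBVKernel V f) (hodd : ∀ x, f (2 - x) = -f x)
    (hfg : Set.EqOn f lam (Set.Icc 0 2)) :
    autocorr (bigLam f) 0 = 2 * ∫ u in (0 : ℝ)..1, bigLam lam u ^ 2 := by
  obtain ⟨V', hΛ⟩ := hf.exists_isBVKernel_bigLam (integral_eq_zero_of_antisymm hodd)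
  exact hΛ.autocorr_zero_eq ((bigLam_congr hfg).mono (Set.Icc_subset_Icc_right one_le_two))
    fun x => by rw [hf.bigLam_two_sub hodd]

theorem IsBVKernel.limitPreAvgCov_zero (hf : IsBVKernel V f) (hodd : ∀ x, f (2 - x) = -f x)
    (hfg : Set.EqOn f lam (Set.Icc 0 2)) (σ τ c : ℝ) :
    limitPreAvgCov σ τ f c 0 = σ ^ 2 / c * (2 * ∫ u in (0 : ℝ)..1, bigLam lam u ^ 2)
      + τ ^ 2 * c * (2 * ∫ u in (0 : ℝ)..1, lam u ^ 2) := by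
  rw [limitPreAvgCov, hf.autocorr_bigLam_zero_eq hodd hfg, hf.autocorr_zero_eq
    (hfg.mono (Set.Icc_subset_Icc_right one_le_two)) fun x => by rw [hodd, neg_sq]]

theorem IsBVKernel.limitPreAvgCov_one (hf : IsBVKernel V f) (hodd : ∀ x, f (2 - x) = -f x)
    (hfg : Set.EqOn f lam (Set.Icc 0 2)) (σ τ c : ℝ) :
    limitPreAvgCov σ τ f c 1 = σ ^ 2 / c * (∫ u in (0 : ℝ)..1, bigLam lam u * bigLam lam (1 - u))
      - τ ^ 2 * c * ∫ u in (0 : ℝ)..1, lam u * lam (1 - u) := by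
  have hsub : Set.Icc (0 : ℝ) 1 ⊆ Set.Icc 0 2 := Set.Icc_subset_Icc_right one_le_two
  obtain ⟨V', hΛ⟩ := hf.exists_isBVKernel_bigLam (integral_eq_zero_of_antisymm hodd)
  rw [limitPreAvgCov,
    hΛ.autocorr_one_eq ((bigLam_congr hfg).mono hsub) (s := 1)
      fun x => by rw [hf.bigLam_two_sub hodd, one_mul],
    hf.autocorr_one_eq (hfg.mono hsub) (s := -1) fun x => by rw [hodd, neg_one_mul]]
  ring

theorem IsPreAverageFn.two_mul_integral_bigLam_sq (hlam : IsPreAverageFn lam) :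
    2 * ∫ s in (0 : ℝ)..1, bigLam lam s ^ 2 = 1 := by
  simpa only [bigLam, neg_sq] using Real.sqrt_eq_one.1 hlam.normalized

theorem MSE_integratedVolatilityEstimator_general {σ τ c : ℝ} (hc : 0 < c)
    (hlam : BoundedVariationOn lam (Set.Icc 0 2))
    (hanti : ∀ t ∈ Set.Icc (0 : ℝ) 1, lam t = -lam (2 - t))
    (hnorm : 2 * ∫ s in (0 : ℝ)..1, bigLam lam s ^ 2 = 1)
    {Ω : ℕ → Type*} [∀ n, MeasureSpace (Ω n)] [∀ n, IsProbabilityMeasure (ℙ : Measure (Ω n))]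
    {W η : (n : ℕ) → ℕ → Ω n → ℝ} (hmodel : ∀ n, IsSimplifiedModel n (W n) (η n)) {m : ℕ → ℕ}
    (hm : Filter.Tendsto (fun n : ℕ => (m n : ℝ) / √n) Filter.atTop (𝓝 c)) :
    Filter.Tendsto (fun n : ℕ => √n * ∫ ω, ((∑ i ∈ Finset.Icc 2 (m n),
        (preAvg lam n (m n) (obs σ τ (W n) (η n)) i ω ^ 2
          - biasCorr lam n (m n) (obs σ τ (W n) (η n)) i ω)) - σ ^ 2) ^ 2) Filter.atTop
      (𝓝 ((4 / c) * (σ ^ 2 * (∫ u in (0 : ℝ)..1, bigLam lam u * bigLam lam (1 - u))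
            - τ ^ 2 * c ^ 2 * ∫ u in (0 : ℝ)..1, lam u * lam (1 - u)) ^ 2
        + (2 / c) * (σ ^ 2 + 2 * τ ^ 2 * c ^ 2 * ∫ u in (0 : ℝ)..1, lam u ^ 2) ^ 2)) := by
  obtain ⟨V, hf⟩ := exists_isBVKernel_indicator hlam
  set f := (Set.Icc 0 2).indicator lam
  have hf_lam : Set.EqOn f lam (Set.Icc 0 2) := Set.eqOn_indicator
  have hodd : ∀ x, f (2 - x) = -f x := indicator_two_sub hanti
  have hint : ∫ x, f x = 0 := integral_eq_zero_of_antisymm hodd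
  obtain ⟨V', hΛ⟩ := hf.exists_isBVKernel_bigLam hint
  have hlim := tendsto_sqrt_mul_integral_sub_sq (σ := σ) (τ := τ) hmodel hf hΛ hint
    ((hf.autocorr_bigLam_zero_eq hodd hf_lam).trans hnorm) hc hm
  rw [hf.limitPreAvgCov_zero hodd hf_lam, hf.limitPreAvgCov_one hodd hf_lam, hnorm] at hlim
  convert hlim.congr' ?_ using 2
  · field_simp
    ring
  · filter_upwards [eventually_two_le_and_le_of_tendsto_div_sqrt hc hm] with n hmn
    rw [preAvg_congr (by lia) (by lia) hf_lam, biasCorr_congr (by lia) (by lia) hf_lam]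

end PreAverageFunction

theorem MSE_integratedVolatilityEstimator (σ τ c : ℝ) (hσ : 0 < σ) (hτ : 0 < τ) (hc : 0 < c)
    (lam : ℝ → ℝ) (hlam : IsPreAverageFn lam)
    (Ω : ℕ → Type*) [∀ n, MeasureSpace (Ω n)] [∀ n, IsProbabilityMeasure (ℙ : Measure (Ω n))]
    (W η : (n : ℕ) → ℕ → Ω n → ℝ)
    (hmodel : ∀ n, IsSimplifiedModel n (W n) (η n)) :
    Filter.Tendsto (fun n : ℕ => Real.sqrt n *
        ∫ ω, ((∑ i ∈ Finset.Icc 2 (mOf c n),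
            ((preAvg lam n (mOf c n) (obs σ τ (W n) (η n)) i ω) ^ 2
              - biasCorr lam n (mOf c n) (obs σ τ (W n) (η n)) i ω)) - σ ^ 2) ^ 2)
      Filter.atTop
      (nhds ((4 / c) * (σ ^ 2 * (∫ u in (0:ℝ)..1, bigLam lam u * bigLam lam (1 - u))
              - τ ^ 2 * c ^ 2 * ∫ u in (0:ℝ)..1, lam u * lam (1 - u)) ^ 2
          + (2 / c) * (σ ^ 2 + 2 * τ ^ 2 * c ^ 2 * ∫ u in (0:ℝ)..1, (lam u) ^ 2) ^ 2)) := by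
  exact MSE_integratedVolatilityEstimator_general hc hlam.boundedVariationOn hlam.antisymm
    hlam.two_mul_integral_bigLam_sq hmodel (tendsto_mOf_div_sqrt hc)
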